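/- arXiv:math/0309360 — 2 statements merged into one kernel-verified Lean document; each statement's English description precedes it below -/
import Mathlib

section
/- In the tower construction, for every n ≥ 2 and every prime ideal q′ of D_{n−1} with q′ ≠ 𝓜_{n−1}, there exists a unique prime ideal q of Dₙ with q ≠ 𝓜ₙ and q ∩ D_{n−1} = q′, and moreover (Dₙ)_q = (D_{n−1})_{q′}(X′ₙ), the Nagata ring of (D_{n−1})_{q′} in the variable X′ₙ. -/
/- Preamble: the tower construction of Fontana–Kabbaj (Example 3.1).
All rings are realized as subsets/subrings of one ambient field `Amb k0 r`:
the rational function field over `k0` in the indeterminates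
`X₁, X₂, …` (indexed by `ℕ`), `Y`, and `Z₁, …, Z_{r-1}`. -/

noncomputable section

open Polynomial

/-- Index type for the indeterminates: `Sum.inl n` is `Xₙ`, `Sum.inr (Sum.inl ())` is `Y`,
and `Sum.inr (Sum.inr i)` is `Z_{i+1}`. -/
abbrev TowerVars (r : ℕ) : Type := ℕ ⊕ (Unit ⊕ Fin (r - 1))

/-- The ambient field: the fraction field of the polynomial ring over `k0` in all the
indeterminates. -/
abbrev Amb (k0 : Type) [Field k0] (r : ℕ) : Type :=
  FractionRing (MvPolynomial (TowerVars r) k0)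

variable (k0 : Type) [Field k0] (r : ℕ)

/-- The indeterminate `Xₙ` as an element of the ambient field. -/
def ambX (n : ℕ) : Amb k0 r :=
  algebraMap (MvPolynomial (TowerVars r) k0) (Amb k0 r) (MvPolynomial.X (Sum.inl n))

/-- The indeterminate `Y` as an element of the ambient field. -/
def ambY : Amb k0 r :=
  algebraMap (MvPolynomial (TowerVars r) k0) (Amb k0 r) (MvPolynomial.X (Sum.inr (Sum.inl ())))

/-- The indeterminates `Z₁, …, Z_{r-1}` as elements of the ambient field. -/
def ambZ (i : Fin (r - 1)) : Amb k0 r :=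
  algebraMap (MvPolynomial (TowerVars r) k0) (Amb k0 r) (MvPolynomial.X (Sum.inr (Sum.inr i)))

/-- The image of the base field `k0` in the ambient field. -/
def baseSet : Set (Amb k0 r) :=
  Set.range fun c : k0 => algebraMap (MvPolynomial (TowerVars r) k0) (Amb k0 r) (MvPolynomial.C c)

/-- `kₙ := k0(X₁, …, Xₙ)` as a subfield of the ambient field. -/
def kfld (n : ℕ) : Subfield (Amb k0 r) :=
  Subfield.closure (baseSet k0 r ∪ {x | ∃ i, 1 ≤ i ∧ i ≤ n ∧ x = ambX k0 r i})

/-- `Fₙ := kₙ(Z₁, …, Z_{r-1})`. -/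
def Ffld (n : ℕ) : Subfield (Amb k0 r) :=
  Subfield.closure (↑(kfld k0 r n) ∪ Set.range (ambZ k0 r))

/-- `Kₙ := Fₙ(Y)`. -/
def Kfld (n : ℕ) : Subfield (Amb k0 r) :=
  Subfield.closure (↑(Ffld k0 r n) ∪ {ambY k0 r})

/-- The polynomial ring `Fₙ[Y]` as a subring of the ambient field. -/
def polyRing (n : ℕ) : Subring (Amb k0 r) :=
  Subring.closure (↑(Ffld k0 r n) ∪ {ambY k0 r})

/-- `Vₙ := Fₙ[Y]_{(Y)}`, the localization of `Fₙ[Y]` at the prime `(Y)`, as a subset of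
the ambient field. -/
def Vset (n : ℕ) : Set (Amb k0 r) :=
  {x | ∃ f ∈ polyRing k0 r n, ∃ g ∈ polyRing k0 r n,
    (¬ ∃ h ∈ polyRing k0 r n, g = ambY k0 r * h) ∧ x = f / g}

/-- `Mₙ := Y·Fₙ[Y]_{(Y)}`, the maximal ideal of `Vₙ`. -/
def Mset (n : ℕ) : Set (Amb k0 r) :=
  {x | ∃ v ∈ Vset k0 r n, x = ambY k0 r * v}

/-- `Aₙ := kₙ + Mₙ`. -/
def Aset (n : ℕ) : Set (Amb k0 r) :=
  {x | ∃ c ∈ kfld k0 r n, ∃ m ∈ Mset k0 r n, x = c + m}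

/-- `k := ⋃ₙ kₙ` as a subset of the ambient field. -/
def kfldU : Set (Amb k0 r) := ⋃ n, (kfld k0 r n : Set (Amb k0 r))

/-- `F := k(Z₁, …, Z_{r-1}) = ⋃ₙ Fₙ`. -/
def FfldU : Subfield (Amb k0 r) :=
  Subfield.closure (kfldU k0 r ∪ Set.range (ambZ k0 r))

/-- `K := F(Y) = ⋃ₙ Kₙ`. -/
def KfldU : Subfield (Amb k0 r) :=
  Subfield.closure (↑(FfldU k0 r) ∪ {ambY k0 r})

/-- The polynomial ring `F[Y]`. -/
def polyRingU : Subring (Amb k0 r) :=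
  Subring.closure (↑(FfldU k0 r) ∪ {ambY k0 r})

/-- `V := F[Y]_{(Y)}`. -/
def VsetU : Set (Amb k0 r) :=
  {x | ∃ f ∈ polyRingU k0 r, ∃ g ∈ polyRingU k0 r,
    (¬ ∃ h ∈ polyRingU k0 r, g = ambY k0 r * h) ∧ x = f / g}

/-- `M := Y·F[Y]_{(Y)} = ⋃ₙ Mₙ`. -/
def MsetU : Set (Amb k0 r) :=
  {x | ∃ v ∈ VsetU k0 r, x = ambY k0 r * v}

/-- `A := k + M = ⋃ₙ Aₙ`. -/
def AsetU : Set (Amb k0 r) :=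
  {x | ∃ c ∈ kfldU k0 r, ∃ m ∈ MsetU k0 r, x = c + m}

/-- `X′ₙ := (1 + Y·Xₙ)/Y`. -/
def ambX' (n : ℕ) : Amb k0 r :=
  (1 + ambY k0 r * ambX k0 r n) / ambY k0 r

/-- `1` belongs to the ideal of `W` generated by the coefficients of `g`, where `W` is a
subring (given as a subset `S`) of the ambient field. -/
def unitContent (S : Set (Amb k0 r)) (g : Polynomial (Amb k0 r)) : Prop :=
  ∃ (t : Finset ℕ) (u : ℕ → Amb k0 r), (∀ i ∈ t, u i ∈ S) ∧ ∑ i ∈ t, u i * g.coeff i = 1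

/-- The Nagata ring `W(T)` of a subring `W ⊆ Amb k0 r` (given as a subset `S`) in the
"variable" `T`: all fractions `f(T)/g(T)` with `f, g ∈ W[T]` and the coefficients of `g`
generating the unit ideal of `W`.  (When `T` is transcendental over `W` this is the usual
Nagata ring.) -/
def nagataSet (S : Set (Amb k0 r)) (T : Amb k0 r) : Set (Amb k0 r) :=
  {x | ∃ f g : Polynomial (Amb k0 r), (∀ i, f.coeff i ∈ S) ∧ (∀ i, g.coeff i ∈ S) ∧
    unitContent k0 r S g ∧ x = f.eval T / g.eval T}

/-- The valuation overrings of a ring `D` (given as a subset) inside a subfield `L` of the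
ambient field: subrings `W` with `D ⊆ W ⊆ L` such that for every `x ∈ L`, `x ∈ W` or
`x⁻¹ ∈ W`. -/
def valOverringsIn (D : Set (Amb k0 r)) (L : Subfield (Amb k0 r)) : Set (Subring (Amb k0 r)) :=
  {W | D ⊆ ↑W ∧ (W : Set (Amb k0 r)) ⊆ (L : Set (Amb k0 r)) ∧ ∀ x ∈ L, x ∈ W ∨ x⁻¹ ∈ W}

/-- The Kronecker function ring `Kr_{L(T)}(D, b) = ⋂ {W(T) : W a valuation overring of `D`
in `L`}`, realized as a subset of the ambient field. -/
def krSet (D : Set (Amb k0 r)) (L : Subfield (Amb k0 r)) (T : Amb k0 r) : Set (Amb k0 r) :=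
  ⋂ W ∈ valOverringsIn k0 r D L, nagataSet k0 r (↑W) T

/-- The tower `Dₙ`: `D₁ := A₁` and `Dₙ := Bₙ ∩ Aₙ` for `n ≥ 2`, where
`Bₙ := Kr_{K_{n-1}(X′ₙ)}(D_{n-1}, b)`.  (The value at `0` is junk, set to `D₁`.) -/
def Dset : ℕ → Set (Amb k0 r)
  | 0 => Aset k0 r 1
  | 1 => Aset k0 r 1
  | n + 2 => krSet k0 r (Dset (n + 1)) (Kfld k0 r (n + 1)) (ambX' k0 r (n + 2)) ∩ Aset k0 r (n + 2)

/-- `Bₙ := Kr_{K_{n-1}(X′ₙ)}(D_{n-1}, b)` (meaningful for `n ≥ 2`). -/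
def Bset (n : ℕ) : Set (Amb k0 r) :=
  krSet k0 r (Dset k0 r (n - 1)) (Kfld k0 r (n - 1)) (ambX' k0 r n)

/-- `𝓜ₙ := Mₙ ∩ Dₙ`. -/
def MMset (n : ℕ) : Set (Amb k0 r) := Mset k0 r n ∩ Dset k0 r n

/-- `D := ⋃__{n ≥ 1} Dₙ`. -/
def DsetU : Set (Amb k0 r) := ⋃ n, Dset k0 r n

/-- `𝓜 := ⋃_{n ≥ 2} 𝓜ₙ`. -/
def MMsetU : Set (Amb k0 r) := ⋃ n, MMset k0 r (n + 2)

/-- The localization `D_m = {a/b : a, b ∈ D, b ∉ m}` of a subring `D` of the ambient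
field (given as a subset) at (the complement of) a subset `m`. -/
def locAt (D m : Set (Amb k0 r)) : Set (Amb k0 r) :=
  {x | ∃ a ∈ D, ∃ b ∈ D, b ∉ m ∧ x = a / b}

/-- The quotient field, inside the ambient field, of a subring given as a subset. -/
def qfSet (D : Set (Amb k0 r)) : Set (Amb k0 r) :=
  {x | ∃ a ∈ D, ∃ b ∈ D, b ≠ 0 ∧ x = a / b}

/-- The nonunits of a subring of the ambient field, given as a subset: in a local
subring of a field these form the maximal ideal. -/
def nonunitsIn (S : Set (Amb k0 r)) : Set (Amb k0 r) :=
  {x | x ∈ S ∧ (x = 0 ∨ x⁻¹ ∉ S)}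

/-- A subring `A` of the ambient field is a pseudo-valuation domain: it is local, and its
maximal ideal (= set of nonunits) is also the maximal ideal of some valuation overring of
`A` in its quotient field. -/
def IsPVDSub (A : Subring (Amb k0 r)) : Prop :=
  IsLocalRing ↥A ∧
  ∃ W : Subring (Amb k0 r), (A : Set (Amb k0 r)) ⊆ ↑W ∧
    (W : Set (Amb k0 r)) ⊆ qfSet k0 r ↑A ∧
    (∀ x ∈ qfSet k0 r (A : Set (Amb k0 r)), x ∈ W ∨ x⁻¹ ∈ W) ∧
    nonunitsIn k0 r ↑A = nonunitsIn k0 r ↑W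

/-- The valuative dimension of a subring of the ambient field: the supremum of the Krull
dimensions of its valuation overrings (in its quotient field). -/
def subValuativeDim (A : Subring (Amb k0 r)) : WithBot ℕ∞ :=
  ⨆ W : {W : Subring (Amb k0 r) // (A : Set (Amb k0 r)) ⊆ ↑W ∧
      (W : Set (Amb k0 r)) ⊆ qfSet k0 r ↑A ∧
      ∀ x ∈ qfSet k0 r (A : Set (Amb k0 r)), x ∈ W ∨ x⁻¹ ∈ W},
    ringKrullDim ↥(W : Subring (Amb k0 r))


/-- `1` belongs to the ideal generated by the coefficients of a multivariable polynomial
`g` in the subring given by the subset `S`. -/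
def mvUnitContent (S : Set (Amb k0 r)) (g : MvPolynomial ℕ (Amb k0 r)) : Prop :=
  ∃ (t : Finset (ℕ →₀ ℕ)) (u : (ℕ →₀ ℕ) → Amb k0 r),
    (∀ m ∈ t, u m ∈ S) ∧ ∑ m ∈ t, u m * MvPolynomial.coeff m g = 1

/-- The Nagata ring `W(T₀, T₁, …)` of a subring `W` of the ambient field (given as a
subset `S`) in countably many "variables" `T j`: all fractions `f(T)/g(T)` with
`f, g ∈ W[T₀, T₁, …]` and the coefficients of `g` generating the unit ideal of `W`. -/
def nagataSetMv (S : Set (Amb k0 r)) (T : ℕ → Amb k0 r) : Set (Amb k0 r) :=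
  {x | ∃ f g : MvPolynomial ℕ (Amb k0 r),
    (∀ m, MvPolynomial.coeff m f ∈ S) ∧ (∀ m, MvPolynomial.coeff m g ∈ S) ∧
    mvUnitContent k0 r S g ∧ x = MvPolynomial.eval T f / MvPolynomial.eval T g}

/-- A subring `S` of the ambient field is an *essential* domain: `S` is the intersection
of a family of localizations `S_p` at primes `p ∈ Δ`, each of which is a valuation domain
(with quotient field the quotient field of `S`). -/
def IsEssentialSub (S : Subring (Amb k0 r)) : Prop :=
  ∃ Δ : Set (Ideal ↥S),
    (∀ p ∈ Δ, p.IsPrime) ∧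
    (∀ p ∈ Δ, ∀ x ∈ qfSet k0 r (S : Set (Amb k0 r)),
      x ∈ locAt k0 r ↑S (Subtype.val '' (p : Set ↥S)) ∨
      x⁻¹ ∈ locAt k0 r ↑S (Subtype.val '' (p : Set ↥S))) ∧
    (S : Set (Amb k0 r)) = ⋂ p ∈ Δ, locAt k0 r ↑S (Subtype.val '' (p : Set ↥S))

end

/-!
The Kronecker function ring `B` of `K(T)` contains `f / (f T ^ N + g)` and `g / (f T ^ N + g)` as
soon as `N > deg g`: over a valuation ring the content of the denominator is generated by one of its
coefficients, and these include all coefficients of `f` and `g`. So every element `f / g` of the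
field is a quotient of two comaximal elements of `B`, and every local ring between `B` and the field
is a valuation ring.

In the tower, `t = X′ₙ⁻¹` is a unit of `Bₙ` and a uniformizer of `Vₙ = Fₙ[Y]_(Y)`, with
`Aₙ = kₙ + t Vₙ`. A prime `q` of `Dₙ = Bₙ ∩ Aₙ` that contains `t` is `𝓜ₙ`, because `a + t ^ N` is
a unit of `Dₙ` for suitable `N` whenever `a ∉ t Vₙ`. If `t ∉ q`, then `Bₙ ⊆ (Dₙ)_q`, so `(Dₙ)_q`
is a valuation ring.

Now let `V = (D_{n-1})_{q′}`. If `q ≠ 𝓜ₙ` lies over `q′`, then `(Dₙ)_q` contains and dominates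
`V(X′ₙ)`, while `Dₙ ⊆ Bₙ ⊆ V(X′ₙ)`; this forces `(Dₙ)_q = V(X′ₙ)`, which also determines `q`.
Contracting the maximal ideal of `V(X′ₙ)` to `Dₙ` gives such a `q`.
-/

open Polynomial IsLocalRing
open scoped Pointwise

section FractionSubring

variable {R K : Type*} [CommRing R] [Field K]

/-- The ring of fractions `S⁻¹R`, realized inside a field `K` through `φ : R →+* K`. A fraction
whose denominator is killed by `φ` is `0`. -/
def fractionSubring (φ : R →+* K) (S : Submonoid R) : Subring K where
  carrier := {x | ∃ a, ∃ s ∈ S, φ a / φ s = x}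
  mul_mem' := by
    rintro _ _ ⟨a, s, hs, rfl⟩ ⟨b, t, ht, rfl⟩
    exact ⟨a * b, s * t, mul_mem hs ht, by simp only [map_mul, mul_div_mul_comm]⟩
  one_mem' := ⟨1, 1, one_mem S, by simp⟩
  add_mem' := by
    rintro _ _ ⟨a, s, hs, rfl⟩ ⟨b, t, ht, rfl⟩
    by_cases hs0 : φ s = 0
    · exact ⟨b, t, ht, by simp [hs0]⟩
    by_cases ht0 : φ t = 0
    · exact ⟨a, s, hs, by simp [ht0]⟩
    · exact ⟨a * t + s * b, s * t, mul_mem hs ht, by simp [div_add_div _ _ hs0 ht0]⟩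
  zero_mem' := ⟨0, 1, one_mem S, by simp⟩
  neg_mem' := by
    rintro _ ⟨a, s, hs, rfl⟩
    exact ⟨-a, s, hs, by simp [neg_div]⟩

theorem mem_fractionSubring {φ : R →+* K} {S : Submonoid R} {x : K} :
    x ∈ fractionSubring φ S ↔ ∃ a, ∃ s ∈ S, φ a / φ s = x :=
  Iff.rfl

theorem map_mem_fractionSubring (φ : R →+* K) (S : Submonoid R) (a : R) :
    φ a ∈ fractionSubring φ S :=
  ⟨a, 1, one_mem S, by simp⟩

theorem inv_map_mem_fractionSubring (φ : R →+* K) {S : Submonoid R} {s : R} (hs : s ∈ S) :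
    (φ s)⁻¹ ∈ fractionSubring φ S :=
  ⟨1, s, hs, by simp⟩

instance (φ : R →+* K) (S : Submonoid R) : Algebra R (fractionSubring φ S) :=
  (φ.codRestrict (fractionSubring φ S) (map_mem_fractionSubring φ S)).toAlgebra

theorem isLocalization_fractionSubring {φ : R →+* K} (hφ : Function.Injective φ) {S : Submonoid R}
    (hS : (0 : R) ∉ S) : IsLocalization S (fractionSubring φ S) := by
  have map_ne_zero {s : R} (hs : s ∈ S) : φ s ≠ 0 :=
    (map_ne_zero_iff φ hφ).2 fun h ↦ hS (h ▸ hs)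
  refine ⟨⟨?_, ?_, ?_⟩⟩
  · rintro ⟨s, hs⟩
    refine IsUnit.of_mul_eq_one ⟨_, inv_map_mem_fractionSubring φ hs⟩ (Subtype.ext ?_)
    exact mul_inv_cancel₀ (map_ne_zero hs)
  · rintro ⟨_, a, s, hs, rfl⟩
    exact ⟨(a, ⟨s, hs⟩), Subtype.ext (div_mul_cancel₀ _ (map_ne_zero hs))⟩
  · intro a b hab
    exact ⟨1, by rw [hφ (congrArg Subtype.val hab)]⟩

theorem isLocalization_atPrime_fractionSubring {φ : R →+* K} (hφ : Function.Injective φ)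
    (P : Ideal R) [P.IsPrime] :
    IsLocalization.AtPrime (fractionSubring φ P.primeCompl) P :=
  isLocalization_fractionSubring hφ (not_not_intro P.zero_mem)

end FractionSubring

section Localization

variable {K : Type*} [Field K]

/-- The localization `D_q` of a subring `D` of a field at a prime ideal `q`. -/
abbrev locAtPrime {D : Subring K} (q : Ideal D) [q.IsPrime] : Subring K :=
  fractionSubring D.subtype q.primeCompl

variable {D : Subring K} (q : Ideal D) [q.IsPrime]

instance : IsLocalization.AtPrime (locAtPrime q) q :=
  isLocalization_atPrime_fractionSubring D.subtype_injective q

instance : IsLocalRing (locAtPrime q) :=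
  IsLocalization.AtPrime.isLocalRing _ q

theorem le_locAtPrime : D ≤ locAtPrime q :=
  fun x hx ↦ map_mem_fractionSubring D.subtype _ ⟨x, hx⟩

theorem maximalIdeal_locAtPrime :
    maximalIdeal (locAtPrime q) = q.map (Subring.inclusion (le_locAtPrime q)) :=
  (IsLocalization.AtPrime.map_eq_maximalIdeal q (locAtPrime q)).symm

theorem comap_maximalIdeal_locAtPrime :
    (maximalIdeal (locAtPrime q)).comap (Subring.inclusion (le_locAtPrime q)) = q :=
  IsLocalization.AtPrime.under_maximalIdeal (locAtPrime q) q

end Localization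

section NagataRing

variable {R : Type*} [CommRing R]

/-- The polynomials over `R` whose coefficients generate the unit ideal. -/
def unitContentSubmonoid (R : Type*) [CommRing R] : Submonoid R[X] where
  carrier := {g | g.contentIdeal = ⊤}
  one_mem' := contentIdeal_one
  mul_mem' := contentIdeal_mul_eq_top_of_contentIdeal_eq_top

theorem mem_unitContentSubmonoid {g : R[X]} :
    g ∈ unitContentSubmonoid R ↔ g.contentIdeal = ⊤ :=
  Iff.rfl

theorem mem_unitContentSubmonoid_of_coeff_mul_eq_one {g : R[X]} {i : ℕ}
    {u : R} (h : u * g.coeff i = 1) : g ∈ unitContentSubmonoid R :=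
  (Ideal.eq_top_iff_one _).2 (h ▸ Ideal.mul_mem_left _ _ (g.coeff_mem_contentIdeal i))

theorem contentIdeal_le_iff {g : R[X]} {I : Ideal R} :
    g.contentIdeal ≤ I ↔ ∀ i, g.coeff i ∈ I := by
  refine ⟨fun h i ↦ h (g.coeff_mem_contentIdeal i), fun h ↦ ?_⟩
  rw [contentIdeal_def, Ideal.span_le]
  intro c hc
  obtain ⟨i, -, rfl⟩ := mem_coeffs_iff.1 hc
  exact h i

theorem mem_unitContentSubmonoid_iff_notMem [IsLocalRing R] {g : R[X]} :
    g ∈ unitContentSubmonoid R ↔ g ∉ (maximalIdeal R).map (C : R →+* R[X]) := by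
  rw [mem_unitContentSubmonoid, Ideal.mem_map_C_iff, ← contentIdeal_le_iff]
  refine ⟨fun h hle ↦ (maximalIdeal.isMaximal R).ne_top (top_le_iff.1 (h ▸ hle)), fun h ↦ ?_⟩
  exact not_not.1 (mt le_maximalIdeal h)

theorem exists_isUnit_coeff [IsLocalRing R] {g : R[X]} (hg : g ∈ unitContentSubmonoid R) :
    ∃ i, IsUnit (g.coeff i) := by
  simpa [mem_unitContentSubmonoid_iff_notMem, Ideal.mem_map_C_iff] using hg

variable {K : Type*} [Field K]

/-- The Nagata ring `W(T)`, realized inside the field `K` with an element `T` of `K` in the role of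
the variable; it is isomorphic to the abstract Nagata ring when `T` is transcendental over `W`. -/
noncomputable abbrev nagataRing (W : Subring K) (T : K) : Subring K :=
  fractionSubring ((aeval T : W[X] →ₐ[W] K) : W[X] →+* K) (unitContentSubmonoid W)

variable {W : Subring K} {T : K}

theorem aeval_mem_nagataRing (f : W[X]) : aeval T f ∈ nagataRing W T :=
  map_mem_fractionSubring _ _ f

theorem inv_aeval_mem_nagataRing {g : W[X]} (hg : g ∈ unitContentSubmonoid W) :
    (aeval T g)⁻¹ ∈ nagataRing W T :=
  inv_map_mem_fractionSubring _ hg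

theorem le_nagataRing : W ≤ nagataRing W T := by
  intro x hx
  have h := aeval_mem_nagataRing (T := T) (C (⟨x, hx⟩ : W))
  rwa [aeval_C] at h

theorem self_mem_nagataRing : T ∈ nagataRing W T := by
  simpa using aeval_mem_nagataRing (T := T) (X : W[X])

theorem inv_self_mem_nagataRing : T⁻¹ ∈ nagataRing W T := by
  have hX : (X : W[X]) ∈ unitContentSubmonoid W :=
    mem_unitContentSubmonoid_of_coeff_mul_eq_one (i := 1) (u := 1) (by simp)
  simpa using inv_aeval_mem_nagataRing (T := T) hX

theorem exists_map_subtype_eq {f : K[X]} (hf : ∀ i, f.coeff i ∈ W) :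
    ∃ g : W[X], g.map W.subtype = f :=
  (mem_lifts f).1 ((lifts_iff_coeff_lifts f).2 fun i ↦ ⟨⟨f.coeff i, hf i⟩, rfl⟩)

theorem eval_map_subtype (f : W[X]) : (f.map W.subtype).eval T = aeval T f :=
  eval_map_algebraMap f T

theorem eval_div_eval_mem_nagataRing {f g : K[X]} (hf : ∀ i, f.coeff i ∈ W)
    (hg : ∀ i, g.coeff i ∈ W) {i : ℕ} (hgi : g.coeff i = 1) :
    f.eval T / g.eval T ∈ nagataRing W T := by
  obtain ⟨f, rfl⟩ := exists_map_subtype_eq hf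
  obtain ⟨g, rfl⟩ := exists_map_subtype_eq hg
  refine ⟨f, g, mem_unitContentSubmonoid_of_coeff_mul_eq_one (i := i) (u := 1) ?_, ?_⟩
  · exact Subtype.ext (by simpa using hgi)
  · simp only [RingHom.coe_coe, eval_map_subtype]

section Local

variable [IsLocalRing W]

theorem isLocalization_atPrime_nagataRing (hT : Transcendental W T) :
    IsLocalization.AtPrime (nagataRing W T) ((maximalIdeal W).map (C : W →+* W[X])) := by
  have heq : ((maximalIdeal W).map (C : W →+* W[X])).primeCompl = unitContentSubmonoid W :=
    Submonoid.ext fun _ ↦ mem_unitContentSubmonoid_iff_notMem.symm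
  rw [IsLocalization.AtPrime, heq]
  exact isLocalization_fractionSubring (transcendental_iff_injective.1 hT)
    (heq ▸ not_not_intro (zero_mem _))

theorem isLocalRing_nagataRing (hT : Transcendental W T) : IsLocalRing (nagataRing W T) :=
  have := isLocalization_atPrime_nagataRing hT
  IsLocalization.AtPrime.isLocalRing _ ((maximalIdeal W).map (C : W →+* W[X]))

theorem maximalIdeal_nagataRing (hT : Transcendental W T) [IsLocalRing (nagataRing W T)] :
    maximalIdeal (nagataRing W T) = (maximalIdeal W).map (Subring.inclusion le_nagataRing) := by
  have := isLocalization_atPrime_nagataRing hT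
  rw [← IsLocalization.AtPrime.map_eq_maximalIdeal ((maximalIdeal W).map (C : W →+* W[X])),
    Ideal.map_map]
  congr 1
  ext w
  exact aeval_C T w

theorem comap_maximalIdeal_nagataRing (hT : Transcendental W T) [IsLocalRing (nagataRing W T)] :
    (maximalIdeal (nagataRing W T)).comap (Subring.inclusion le_nagataRing) = maximalIdeal W := by
  have hprime : ((maximalIdeal (nagataRing W T)).comap (Subring.inclusion le_nagataRing)).IsPrime :=
    inferInstance
  refine ((maximalIdeal.isMaximal W).eq_of_le hprime.ne_top ?_).symm
  rw [← Ideal.map_le_iff_le_comap, ← maximalIdeal_nagataRing hT]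

end Local

end NagataRing

section Kronecker

variable {K : Type*} [Field K]

/-- `W` is a valuation ring of the subfield `L` of `K`. -/
structure IsValuationRingOf (W : Subring K) (L : Subfield K) : Prop where
  le : W ≤ L.toSubring
  mem_or_inv_mem : ∀ x ∈ L, x ∈ W ∨ x⁻¹ ∈ W

variable {W : Subring K} {L : Subfield K}

theorem isValuationRingOf_toSubring (L : Subfield K) : IsValuationRingOf L.toSubring L :=
  ⟨le_rfl, fun _ ↦ Or.inl⟩

theorem IsValuationRingOf.exists_forall_div_mem (hW : IsValuationRingOf W L) {s : Finset L}
    (hs : s.Nonempty) (hs0 : 0 ∉ s) : ∃ c ∈ s, ∀ a ∈ s, ((a / c : L) : K) ∈ W := by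
  induction hs using Finset.Nonempty.cons_induction with
  | singleton b => exact ⟨b, by simp, by simp_all [div_self, eq_comm]⟩
  | cons b s _ _ ih =>
    simp only [Finset.mem_cons, not_or, forall_eq_or_imp, exists_eq_or_imp] at hs0 ⊢
    obtain ⟨c, hc, hcs⟩ := ih hs0.2
    have hc0 : c ≠ 0 := fun h ↦ hs0.2 (h ▸ hc)
    rcases hW.mem_or_inv_mem _ (b / c).2 with h | h
    · exact Or.inr ⟨c, hc, h, hcs⟩
    · refine Or.inl ⟨by simp [div_self (Ne.symm hs0.1), one_mem], fun a ha ↦ ?_⟩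
      rw [← div_mul_div_cancel₀ hc0, ← inv_div b c]
      exact mul_mem (hcs a ha) h

/-- The Kronecker function ring `Kr_{L(T)}(D, b)`: the intersection of the Nagata rings `W(T)` of
the valuation overrings `W` of `D` in `L`. -/
noncomputable def kroneckerRing (D : Subring K) (L : Subfield K) (T : K) : Subring K :=
  ⨅ (W : Subring K) (_ : D ≤ W ∧ IsValuationRingOf W L), nagataRing W T

variable {D : Subring K} {T : K}

theorem mem_kroneckerRing {x : K} :
    x ∈ kroneckerRing D L T ↔
      ∀ W : Subring K, D ≤ W ∧ IsValuationRingOf W L → x ∈ nagataRing W T := by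
  simp only [kroneckerRing, Subring.mem_iInf]

theorem kroneckerRing_le_nagataRing (hDW : D ≤ W) (hW : IsValuationRingOf W L) :
    kroneckerRing D L T ≤ nagataRing W T :=
  fun _ hx ↦ mem_kroneckerRing.1 hx W ⟨hDW, hW⟩

theorem le_kroneckerRing : D ≤ kroneckerRing D L T :=
  fun _ hx ↦ mem_kroneckerRing.2 fun _ hW ↦ le_nagataRing (hW.1 hx)

theorem self_mem_kroneckerRing : T ∈ kroneckerRing D L T :=
  mem_kroneckerRing.2 fun _ _ ↦ self_mem_nagataRing

theorem inv_self_mem_kroneckerRing : T⁻¹ ∈ kroneckerRing D L T :=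
  mem_kroneckerRing.2 fun _ _ ↦ inv_self_mem_nagataRing

theorem kroneckerRing_le_adjoin (hDL : D ≤ L.toSubring) :
    kroneckerRing D L T ≤ (IntermediateField.adjoin L {T}).toSubfield.toSubring := by
  refine (kroneckerRing_le_nagataRing hDL (isValuationRingOf_toSubring L)).trans ?_
  rintro _ ⟨f, g, -, rfl⟩
  exact (IntermediateField.mem_adjoin_simple_iff L _).2 ⟨f, g, rfl⟩

theorem zero_notMem_coeffs {R : Type*} [Semiring R] (f : R[X]) : 0 ∉ f.coeffs := fun h ↦ by
  obtain ⟨i, hi, h0⟩ := mem_coeffs_iff.1 h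
  exact mem_support_iff.1 hi h0.symm

-- Dividing by a coefficient of `g` of largest value puts all coefficients in `W` and one at `1`.
theorem aeval_div_aeval_mem_kroneckerRing {f g : L[X]} (hg0 : g ≠ 0) (hfg : f.coeffs ⊆ g.coeffs) :
    aeval T f / aeval T g ∈ kroneckerRing D L T := by
  refine mem_kroneckerRing.2 fun W ⟨_, hW⟩ ↦ ?_
  obtain ⟨c, hc, hcW⟩ :=
    hW.exists_forall_div_mem (coeffs_nonempty_iff.2 hg0) (zero_notMem_coeffs g)
  have hc0 : c ≠ 0 := fun h ↦ zero_notMem_coeffs g (h ▸ hc)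
  obtain ⟨j, -, rfl⟩ := mem_coeffs_iff.1 hc
  have coeff_mem {p : L[X]} (hp : p.coeffs ⊆ g.coeffs) (i : ℕ) :
      ((C (g.coeff j)⁻¹ * p).map L.subtype).coeff i ∈ W := by
    rw [coeff_map, coeff_C_mul, mul_comm, ← div_eq_mul_inv]
    by_cases hpi : p.coeff i = 0
    · simp [hpi, zero_mem]
    · exact hcW _ (hp (coeff_mem_coeffs hpi))
  have h := eval_div_eval_mem_nagataRing (T := T) (coeff_mem hfg) (coeff_mem subset_rfl)
    (i := j) (by rw [coeff_map, coeff_C_mul, inv_mul_cancel₀ hc0, map_one])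
  have hc0' : L.subtype (g.coeff j)⁻¹ ≠ 0 := by simpa using hc0
  simp only [Polynomial.map_mul, map_C, eval_C_mul] at h
  rwa [mul_div_mul_left _ _ hc0', ← Subfield.algebraMap_ofSubfield, eval_map_algebraMap,
    eval_map_algebraMap] at h

theorem coeff_div_aeval_mem_kroneckerRing (hWL : W ≤ L.toSubring) (g : W[X]) (i : ℕ) :
    (g.coeff i : K) / aeval T g ∈ kroneckerRing D L T := by
  by_cases hgi : g.coeff i = 0
  · rw [hgi, Subring.coe_zero, zero_div]
    exact zero_mem _
  let φ : W →+* L := Subring.inclusion hWL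
  have hφ : (algebraMap L K).comp φ = algebraMap W K := rfl
  have hgi' : (g.map φ).coeff i ≠ 0 := by
    rw [coeff_map]
    exact (map_ne_zero_iff φ (Subring.inclusion_injective hWL)).2 hgi
  have hsub : (C ((g.map φ).coeff i)).coeffs ⊆ (g.map φ).coeffs := by
    rw [← monomial_zero_left, coeffs_monomial 0 hgi', Finset.singleton_subset_iff]
    exact coeff_mem_coeffs hgi'
  have h := aeval_div_aeval_mem_kroneckerRing (D := D) (T := T)
    (fun h0 ↦ hgi' (by rw [h0, coeff_zero])) hsub
  rwa [aeval_C, aeval_def, eval₂_map, hφ, ← aeval_def, coeff_map] at h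

end Kronecker

section ComaximalFractions

variable {K : Type*} [Field K]

/-- `B` is a subring of `L`, `t` is a unit of `B`, and every `x ∈ L` can be written as `u / v` with
`u` and `v` comaximal elements of `B`, in the precise form `u + t ^ N * v = t ^ N` with `N ≠ 0`. -/
structure HasComaximalFractions (B : Subring K) (L : Subfield K) (t : K) : Prop where
  le : B ≤ L.toSubring
  ne_zero : t ≠ 0
  self_mem : t ∈ B
  inv_self_mem : t⁻¹ ∈ B
  exists_mul_add_pow_mul_eq : ∀ x ∈ L, ∃ N ≠ 0, ∃ v ∈ B, x * v ∈ B ∧ x * v + t ^ N * v = t ^ N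

theorem inv_mem_of_isUnit {W : Subring K} {w : W} (hw : IsUnit w) : (w : K)⁻¹ ∈ W := by
  obtain ⟨u, hu⟩ := hw.exists_right_inv
  exact inv_eq_of_mul_eq_one_right (congrArg Subtype.val hu) ▸ u.2

namespace HasComaximalFractions

variable {B : Subring K} {L : Subfield K} {t : K} (hB : HasComaximalFractions B L t)
include hB

theorem exists_inv_add_pow_mem {x : K} (hx : x ∈ L) : ∃ N ≠ 0, (x + t ^ N)⁻¹ ∈ B := by
  obtain ⟨N, hN, v, hv, -, h⟩ := hB.exists_mul_add_pow_mul_eq x hx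
  refine ⟨N, hN, ?_⟩
  have hxv : (x + t ^ N) * (t⁻¹ ^ N * v) = 1 := by
    rw [mul_left_comm, add_mul, h, ← mul_pow, inv_mul_cancel₀ hB.ne_zero, one_pow]
  rw [inv_eq_of_mul_eq_one_right hxv]
  exact B.mul_mem (B.pow_mem hB.inv_self_mem N) hv

theorem isValuationRingOf {W : Subring K} [IsLocalRing W] (hBW : B ≤ W) (hWL : W ≤ L.toSubring) :
    IsValuationRingOf W L := by
  refine ⟨hWL, fun x hx ↦ ?_⟩
  obtain ⟨N, -, v, hv, hxv, h⟩ := hB.exists_mul_add_pow_mul_eq x hx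
  have htN : t⁻¹ ^ N ∈ W := W.pow_mem (hBW hB.inv_self_mem) N
  let u : W := ⟨t⁻¹ ^ N * (x * v), W.mul_mem htN (hBW hxv)⟩
  have huv : u + ⟨v, hBW hv⟩ = 1 := by
    ext
    change t⁻¹ ^ N * (x * v) + v = 1
    have := hB.ne_zero
    rw [inv_pow]
    field_simp
    linear_combination h
  rcases isUnit_or_isUnit_of_add_one huv with hu | hv_unit
  · right
    have hu0 : (u : K) ≠ 0 := fun h0 ↦ hu.ne_zero (Subtype.ext h0)
    have hx_inv : x⁻¹ = t⁻¹ ^ N * v * (u : K)⁻¹ := by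
      obtain ⟨htN0, hx0, hv0⟩ : t⁻¹ ^ N ≠ 0 ∧ x ≠ 0 ∧ v ≠ 0 := by simpa [u, not_or] using hu0
      simp only [u, mul_inv]
      rw [mul_mul_mul_comm, mul_inv_cancel₀ htN0]
      field_simp
    exact hx_inv ▸ W.mul_mem (W.mul_mem htN (hBW hv)) (inv_mem_of_isUnit hu)
  · left
    have hv0 : v ≠ 0 := fun h0 ↦ hv_unit.ne_zero (Subtype.ext h0)
    exact mul_inv_cancel_right₀ hv0 x ▸ W.mul_mem (hBW hxv) (inv_mem_of_isUnit hv_unit)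

end HasComaximalFractions

theorem hasComaximalFractions_toSubring {L : Subfield K} {t : K} (ht : t ∈ L) (ht0 : t ≠ 0)
    (ht1 : t ≠ 1) : HasComaximalFractions L.toSubring L t where
  le := le_rfl
  ne_zero := ht0
  self_mem := ht
  inv_self_mem := L.inv_mem ht
  exists_mul_add_pow_mul_eq x hx := by
    obtain ⟨N, hN, hxN⟩ : ∃ N ≠ 0, x + t ^ N ≠ 0 := by
      by_contra! h
      have h12 : t ^ 2 = t ^ 1 := add_left_cancel ((h 2 two_ne_zero).trans (h 1 one_ne_zero).symm)
      exact ht1 (mul_left_cancel₀ ht0 (by linear_combination h12))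
    have hv : t ^ N / (x + t ^ N) ∈ L := div_mem (pow_mem ht N) (add_mem hx (pow_mem ht N))
    refine ⟨N, hN, t ^ N / (x + t ^ N), hv, mul_mem hx hv, ?_⟩
    rw [← add_mul, mul_div_cancel₀ _ hxN]

section CoeffsMulXPowAdd

variable {R : Type*} [Semiring R] {f g : R[X]} {N : ℕ}

theorem coeffs_subset_coeffs_mul_X_pow_add_left (hN : g.natDegree < N) :
    f.coeffs ⊆ (f * X ^ N + g).coeffs := by
  intro c hc
  obtain ⟨i, hi, rfl⟩ := mem_coeffs_iff.1 hc
  have h : (f * X ^ N + g).coeff (i + N) = f.coeff i := by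
    rw [coeff_add, coeff_mul_X_pow, coeff_eq_zero_of_natDegree_lt (hN.trans_le le_add_self),
      add_zero]
  exact h ▸ coeff_mem_coeffs (h ▸ mem_support_iff.1 hi)

theorem coeffs_subset_coeffs_mul_X_pow_add_right (hN : g.natDegree < N) :
    g.coeffs ⊆ (f * X ^ N + g).coeffs := by
  intro c hc
  obtain ⟨i, hi, rfl⟩ := mem_coeffs_iff.1 hc
  have h : (f * X ^ N + g).coeff i = g.coeff i := by
    have hiN : i < N := (le_natDegree_of_mem_supp i hi).trans_lt hN
    rw [coeff_add, coeff_mul_X_pow', if_neg hiN.not_ge, zero_add]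
  exact h ▸ coeff_mem_coeffs (h ▸ mem_support_iff.1 hi)

end CoeffsMulXPowAdd

theorem hasComaximalFractions_kroneckerRing {D : Subring K} {L : Subfield K} {T : K}
    (hDL : D ≤ L.toSubring) (hT : Transcendental L T) :
    HasComaximalFractions (kroneckerRing D L T) (IntermediateField.adjoin L {T}).toSubfield
      T⁻¹ where
  le := kroneckerRing_le_adjoin hDL
  ne_zero := inv_ne_zero (by rintro rfl; exact hT isAlgebraic_zero)
  self_mem := inv_self_mem_kroneckerRing
  inv_self_mem := by simpa using self_mem_kroneckerRing
  exists_mul_add_pow_mul_eq x hx := by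
    obtain ⟨f, g, rfl⟩ := (IntermediateField.mem_adjoin_simple_iff L x).1 hx
    set N := g.natDegree + 1
    rcases eq_or_ne g 0 with rfl | hg0
    · exact ⟨1, one_ne_zero, 1, one_mem _, by simp [zero_mem], by simp⟩
    have hfh := coeffs_subset_coeffs_mul_X_pow_add_left (f := f) (Nat.lt_succ_self g.natDegree)
    have hgh := coeffs_subset_coeffs_mul_X_pow_add_right (f := f) (Nat.lt_succ_self g.natDegree)
    set h : L[X] := f * X ^ N + g
    have hh0 : h ≠ 0 := by
      rw [← coeffs_nonempty_iff] at hg0 ⊢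
      exact hg0.mono hgh
    have ne_zero {p : L[X]} (hp : p ≠ 0) : aeval T p ≠ 0 := mt (transcendental_iff.1 hT p) hp
    have hh : aeval T h = aeval T f * T ^ N + aeval T g := by simp [h]
    have hT0 : T ≠ 0 := by simpa using ne_zero X_ne_zero
    refine ⟨N, Nat.succ_ne_zero _, aeval T g / aeval T h,
      aeval_div_aeval_mem_kroneckerRing hh0 hgh, ?_, ?_⟩
    · rw [div_mul_div_cancel₀ (ne_zero hg0)]
      exact aeval_div_aeval_mem_kroneckerRing hh0 hfh
    · rw [div_mul_div_cancel₀ (ne_zero hg0), inv_pow]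
      have := ne_zero hh0
      field_simp
      linear_combination -hh

end ComaximalFractions

section Uniformizer

variable {K : Type*} [Field K]

/-- When `V ⊆ L`, this says that `V` is a discrete valuation ring of the field `L` with uniformizer
`t`, expressed by memberships in the ambient field `K` instead of a valuation. -/
structure IsUniformizer (V : Subring K) (L : Subfield K) (t : K) : Prop where
  mem : t ∈ V
  inv_notMem : t⁻¹ ∉ V
  inv_mem_or_inv_mul_mem : ∀ v ∈ V, v⁻¹ ∈ V ∨ t⁻¹ * v ∈ V
  exists_pow_mul_mem : ∀ x ∈ L, ∃ N : ℕ, t ^ N * x ∈ V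

/-- The ring `k + tV`, for a field `k` contained in the ring `V` and `t ∈ V`. -/
def addPrincipal (k : Subfield K) {V : Subring K} {t : K} (hk : k.toSubring ≤ V) (ht : t ∈ V) :
    Subring K where
  carrier := {x | ∃ c ∈ k, ∃ v ∈ V, c + t * v = x}
  zero_mem' := ⟨0, k.zero_mem, 0, V.zero_mem, by ring⟩
  one_mem' := ⟨1, k.one_mem, 0, V.zero_mem, by ring⟩
  add_mem' := by
    rintro _ _ ⟨c, hc, v, hv, rfl⟩ ⟨d, hd, w, hw, rfl⟩
    exact ⟨c + d, k.add_mem hc hd, v + w, V.add_mem hv hw, by ring⟩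
  neg_mem' := by
    rintro _ ⟨c, hc, v, hv, rfl⟩
    exact ⟨-c, k.neg_mem hc, -v, V.neg_mem hv, by ring⟩
  mul_mem' := by
    rintro _ _ ⟨c, hc, v, hv, rfl⟩ ⟨d, hd, w, hw, rfl⟩
    exact ⟨c * d, k.mul_mem hc hd, c * w + v * d + t * (v * w),
      V.add_mem (V.add_mem (V.mul_mem (hk hc) hw) (V.mul_mem hv (hk hd)))
        (V.mul_mem ht (V.mul_mem hv hw)), by ring⟩

variable {k L : Subfield K} {V : Subring K} {t : K} {hk : k.toSubring ≤ V}

section AddPrincipal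

variable {ht : t ∈ V}

theorem mul_mem_addPrincipal {v : K} (hv : v ∈ V) : t * v ∈ addPrincipal k hk ht :=
  ⟨0, k.zero_mem, v, hv, zero_add _⟩

theorem addPrincipal_le : addPrincipal k hk ht ≤ V := by
  rintro _ ⟨c, hc, v, hv, rfl⟩
  exact V.add_mem (hk hc) (V.mul_mem ht hv)

end AddPrincipal

theorem coe_units_ne_zero (u : Vˣ) : ((u : V) : K) ≠ 0 :=
  fun h ↦ u.ne_zero (Subtype.ext h)

namespace IsUniformizer

variable (ht : IsUniformizer V L t)

include ht

theorem ne_zero : t ≠ 0 := by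
  rintro rfl
  exact ht.inv_notMem (by simp [V.zero_mem])

theorem mem_smul_iff {x : K} : x ∈ t • (V : Set K) ↔ t⁻¹ * x ∈ V :=
  Set.mem_smul_set_iff_inv_smul_mem₀ ht.ne_zero _ _

theorem inv_mem_addPrincipal {a : K} (ha : a ∈ addPrincipal k hk ht.mem)
    (hat : a ∉ t • (V : Set K)) : a⁻¹ ∈ addPrincipal k hk ht.mem := by
  have ha_inv : a⁻¹ ∈ V := (ht.inv_mem_or_inv_mul_mem a (addPrincipal_le ha)).resolve_right
    (mt ht.mem_smul_iff.2 hat)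
  have ha0 : a ≠ 0 := by
    rintro rfl
    exact hat ⟨0, V.zero_mem, smul_zero t⟩
  obtain ⟨c, hc, v, hv, rfl⟩ := ha
  have hc0 : c ≠ 0 := by
    rintro rfl
    exact hat ⟨v, hv, (zero_add _).symm⟩
  refine ⟨c⁻¹, k.inv_mem hc, -(c⁻¹ * (c + t * v)⁻¹ * v),
    V.neg_mem (V.mul_mem (V.mul_mem (hk (k.inv_mem hc)) ha_inv) hv), ?_⟩
  field_simp
  ring

theorem exists_pow_mul_mem_addPrincipal {x : K} (hx : x ∈ L) :
    ∃ N, t ^ N * x ∈ addPrincipal k hk ht.mem := by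
  obtain ⟨N, hN⟩ := ht.exists_pow_mul_mem x hx
  refine ⟨N + 1, ?_⟩
  rw [pow_succ', mul_assoc]
  exact mul_mem_addPrincipal hN

theorem mul_units (u : Vˣ) : IsUniformizer V L (t * (u : V)) where
  mem := V.mul_mem ht.mem (u : V).2
  inv_notMem h := ht.inv_notMem <| by
    have := V.mul_mem h (u : V).2
    rwa [mul_inv, inv_mul_cancel_right₀ (coe_units_ne_zero u)] at this
  inv_mem_or_inv_mul_mem v hv := (ht.inv_mem_or_inv_mul_mem v hv).imp_right fun h ↦ by
    rw [mul_inv, mul_right_comm]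
    exact V.mul_mem h (inv_mem_of_isUnit u.isUnit)
  exists_pow_mul_mem x hx := by
    obtain ⟨N, hN⟩ := ht.exists_pow_mul_mem x hx
    refine ⟨N, ?_⟩
    rw [mul_pow, mul_right_comm]
    exact V.mul_mem hN (V.pow_mem (u : V).2 N)

end IsUniformizer

theorem mul_units_smul_coe (u : Vˣ) :
    (t * (u : V)) • (V : Set K) = t • (V : Set K) := by
  rw [mul_smul]
  congr 1
  ext x
  rw [Set.mem_smul_set_iff_inv_smul_mem₀ (coe_units_ne_zero u), smul_eq_mul]
  refine ⟨fun h ↦ ?_, fun h ↦ V.mul_mem (inv_mem_of_isUnit u.isUnit) h⟩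
  exact mul_inv_cancel_left₀ (coe_units_ne_zero u) x ▸ V.mul_mem (u : V).2 h

section Primes

variable {B : Subring K} (hB : HasComaximalFractions B L t) (ht : IsUniformizer V L t)
include hB

theorem self_mem_inf_addPrincipal : t ∈ B ⊓ addPrincipal k hk ht.mem :=
  ⟨hB.self_mem, by simpa using mul_mem_addPrincipal (k := k) (ht := ht.mem) (hk := hk) V.one_mem⟩

variable {q : Ideal ↥(B ⊓ addPrincipal k hk ht.mem)} [q.IsPrime]

-- For `a ∈ q` outside `tV`, some `a + t ^ N ∈ q` would be a unit.
theorem coe_mem_smul_of_mem (htq : ⟨t, self_mem_inf_addPrincipal hB ht⟩ ∈ q)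
    {a : ↥(B ⊓ addPrincipal k hk ht.mem)} (ha : a ∈ q) : (a : K) ∈ t • (V : Set K) := by
  by_contra hat
  obtain ⟨N, hN, hNB⟩ := hB.exists_inv_add_pow_mem (hB.le a.2.1)
  let b := a + ⟨t, self_mem_inf_addPrincipal hB ht⟩ ^ N
  have hbq : b ∈ q := q.add_mem ha (q.pow_mem_of_mem htq N (Nat.pos_of_ne_zero hN))
  have hbt : (b : K) ∉ t • (V : Set K) := by
    rintro ⟨v, hv, hvb⟩
    refine hat ⟨v - t ^ (N - 1), V.sub_mem hv (V.pow_mem ht.mem _), ?_⟩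
    change t * v = a + t ^ N at hvb
    change t * (v - t ^ (N - 1)) = a
    rw [mul_sub, mul_pow_sub_one hN, hvb, add_sub_cancel_right]
  have hb0 : (b : K) ≠ 0 := fun h ↦ hbt ⟨0, V.zero_mem, by simp [h]⟩
  have hb_inv : (b : K)⁻¹ ∈ B ⊓ addPrincipal k hk ht.mem :=
    ⟨hNB, ht.inv_mem_addPrincipal b.2.2 hbt⟩
  have hb_unit : b * ⟨_, hb_inv⟩ = 1 := Subtype.ext (mul_inv_cancel₀ hb0)
  exact q.one_notMem (hb_unit ▸ q.mul_mem_right _ hbq)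

theorem mem_of_coe_mem_smul (htq : ⟨t, self_mem_inf_addPrincipal hB ht⟩ ∈ q)
    {a : ↥(B ⊓ addPrincipal k hk ht.mem)} (ha : (a : K) ∈ t • (V : Set K)) : a ∈ q := by
  have hv := ht.mem_smul_iff.1 ha
  let b : ↥(B ⊓ addPrincipal k hk ht.mem) := ⟨t * (t⁻¹ * a) ^ 2,
    B.mul_mem hB.self_mem (B.pow_mem (B.mul_mem hB.inv_self_mem a.2.1) 2),
    mul_mem_addPrincipal (V.pow_mem hv 2)⟩
  have hab : a ^ 2 = ⟨t, self_mem_inf_addPrincipal hB ht⟩ * b := by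
    ext
    change (a : K) ^ 2 = t * (t * (t⁻¹ * a) ^ 2)
    have := ht.ne_zero
    field_simp
  exact Ideal.IsPrime.mem_of_pow_mem ‹_› 2 (hab ▸ q.mul_mem_right b htq)

theorem val_image_eq_smul_inter_iff :
    Subtype.val '' (q : Set ↥(B ⊓ addPrincipal k hk ht.mem)) =
        t • (V : Set K) ∩ ↑(B ⊓ addPrincipal k hk ht.mem) ↔
      t ∈ Subtype.val '' (q : Set ↥(B ⊓ addPrincipal k hk ht.mem)) := by
  constructor
  · intro h
    rw [h]
    exact ⟨⟨1, V.one_mem, mul_one t⟩, self_mem_inf_addPrincipal hB ht⟩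
  · rintro ⟨s, hs, hst⟩
    obtain rfl : s = ⟨t, self_mem_inf_addPrincipal hB ht⟩ := Subtype.ext hst
    ext x
    constructor
    · rintro ⟨a, ha, rfl⟩
      exact ⟨coe_mem_smul_of_mem hB ht hs ha, a.2⟩
    · rintro ⟨hxV, hx⟩
      exact ⟨⟨x, hx⟩, mem_of_coe_mem_smul hB ht hs hxV, rfl⟩

variable (htq : t ∉ Subtype.val '' (q : Set ↥(B ⊓ addPrincipal k hk ht.mem)))
include htq

theorem le_locAtPrime_of_notMem : B ≤ locAtPrime q := by
  intro x hx
  obtain ⟨N, hN⟩ := ht.exists_pow_mul_mem_addPrincipal (k := k) (hk := hk) (hB.le hx)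
  let s : ↥(B ⊓ addPrincipal k hk ht.mem) := ⟨t, self_mem_inf_addPrincipal hB ht⟩
  have hs : s ^ N ∉ q := fun h ↦ htq ⟨s, Ideal.IsPrime.mem_of_pow_mem ‹_› N h, rfl⟩
  exact ⟨⟨_, B.mul_mem (B.pow_mem hB.self_mem N) hx, hN⟩, s ^ N, hs,
    mul_div_cancel_left₀ x (pow_ne_zero N ht.ne_zero)⟩

theorem isValuationRingOf_locAtPrime : IsValuationRingOf (locAtPrime q) L := by
  refine hB.isValuationRingOf (le_locAtPrime_of_notMem hB ht htq) ?_
  rintro _ ⟨a, s, -, rfl⟩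
  exact L.div_mem (hB.le a.2.1) (hB.le s.2.1)

end Primes

end Uniformizer

section KroneckerStep

variable {K : Type*} [Field K] {D D' : Subring K} {L : Subfield K} {T : K}

theorem transcendental_of_le {W : Subring K} (hWL : W ≤ L.toSubring) (hT : Transcendental L T) :
    Transcendental W T :=
  hT.of_ringHom_of_comp_eq (Subring.inclusion hWL) (RingHom.id K) (Subring.inclusion_injective hWL)
    rfl

section Transfer

variable {q : Ideal D'} [q.IsPrime] {q' : Ideal D} [q'.IsPrime] (hD : D ≤ D')
  (hqq' : q.comap (Subring.inclusion hD) = q')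
include hqq'

theorem locAtPrime_le_locAtPrime : locAtPrime q' ≤ locAtPrime q := by
  rintro _ ⟨a, s, hs, rfl⟩
  exact ⟨Subring.inclusion hD a, Subring.inclusion hD s, fun h ↦ hs (hqq' ▸ h), rfl⟩

theorem nagataRing_le_locAtPrime (hVL : locAtPrime q' ≤ L.toSubring)
    (hB : kroneckerRing D L T ≤ locAtPrime q) : nagataRing (locAtPrime q') T ≤ locAtPrime q := by
  have hV := locAtPrime_le_locAtPrime hD hqq'
  have hT : T ∈ locAtPrime q := hB self_mem_kroneckerRing
  rintro _ ⟨f, g, hg, rfl⟩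
  have hf : aeval T f ∈ locAtPrime q := by
    rw [aeval_eq_sum_range]
    exact sum_mem fun i _ ↦ mul_mem (hV (f.coeff i).2) (pow_mem hT i)
  obtain ⟨i, hi⟩ := exists_isUnit_coeff hg
  have hgi : (g.coeff i : K) ≠ 0 := fun h ↦ hi.ne_zero (Subtype.ext h)
  have hg_inv : (aeval T g)⁻¹ = (g.coeff i : K)⁻¹ * ((g.coeff i : K) / aeval T g) := by
    field_simp
  change aeval T f / aeval T g ∈ _
  rw [div_eq_mul_inv, hg_inv]
  exact mul_mem hf (mul_mem (hV (inv_mem_of_isUnit hi))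
    (hB (coeff_div_aeval_mem_kroneckerRing hVL g i)))

-- The maximal ideal of `V(T)`, with `V = D_{q'}`, is generated by `q'`, so `D'_q` dominates `V(T)`.
theorem locAtPrime_eq_nagataRing (hT : Transcendental L T)
    (hV : IsValuationRingOf (locAtPrime q') L) (hD'B : D' ≤ kroneckerRing D L T)
    (hB : kroneckerRing D L T ≤ locAtPrime q) :
    locAtPrime q = nagataRing (locAtPrime q') T := by
  have hTV := transcendental_of_le hV.le hT
  have := isLocalRing_nagataRing hTV
  have hle := nagataRing_le_locAtPrime hD hqq' hV.le hB
  have hD'N : D' ≤ nagataRing (locAtPrime q') T :=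
    hD'B.trans (kroneckerRing_le_nagataRing (le_locAtPrime q') hV)
  have hlocal : IsLocalHom (Subring.inclusion hle) := by
    refine ((local_hom_TFAE _).out 0 2).2 ?_
    rw [maximalIdeal_nagataRing hTV, maximalIdeal_locAtPrime, Ideal.map_map, Ideal.map_map,
      Ideal.map_le_iff_le_comap]
    exact hqq'.ge.trans (Ideal.comap_mono (comap_maximalIdeal_locAtPrime q).ge)
  refine hle.antisymm' ?_
  rintro _ ⟨a, s, hs, rfl⟩
  have hs_unit : IsUnit (Subring.inclusion hle ⟨s, hD'N s.2⟩) :=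
    (IsLocalization.AtPrime.isUnit_to_map_iff (locAtPrime q) q s).2 hs
  rw [div_eq_mul_inv]
  exact mul_mem (hD'N a.2) (inv_mem_of_isUnit (hs_unit.of_map _ _))

end Transfer

theorem exists_isPrime_comap_eq {q' : Ideal D} [q'.IsPrime] (hD : D ≤ D')
    (hT : Transcendental L T) (hV : IsValuationRingOf (locAtPrime q') L)
    (hD'B : D' ≤ kroneckerRing D L T) :
    ∃ q : Ideal D', q.IsPrime ∧ T⁻¹ ∉ Subtype.val '' (q : Set D') ∧
      q.comap (Subring.inclusion hD) = q' := by
  have hTV := transcendental_of_le hV.le hT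
  have := isLocalRing_nagataRing hTV
  have hD'N : D' ≤ nagataRing (locAtPrime q') T :=
    hD'B.trans (kroneckerRing_le_nagataRing (le_locAtPrime q') hV)
  have hT0 : T ≠ 0 := by
    rintro rfl
    exact hT isAlgebraic_zero
  refine ⟨(maximalIdeal (nagataRing (locAtPrime q') T)).comap (Subring.inclusion hD'N),
    inferInstance, ?_, ?_⟩
  · rintro ⟨s, hs, hsT⟩
    have hunit : Subring.inclusion hD'N s * ⟨T, self_mem_nagataRing⟩ = 1 :=
      Subtype.ext ((congrArg (· * T) hsT).trans (inv_mul_cancel₀ hT0))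
    exact (mem_maximalIdeal _).1 hs (.of_mul_eq_one _ hunit)
  · refine Eq.trans ?_ (comap_maximalIdeal_locAtPrime q')
    rw [← comap_maximalIdeal_nagataRing hTV]
    rfl

end KroneckerStep

section LocalizationAtVariable

variable {K : Type*} [Field K]

instance isPrime_span_X {F : Type*} [Field F] : (Ideal.span {(X : F[X])}).IsPrime :=
  (Ideal.span_singleton_prime X_ne_zero).2 prime_X

/-- The ring `F[y]_(y)`, realized inside a field `K` containing the field `F` and `y`; this is
really a localization when `y` is transcendental over `F`. -/
noncomputable abbrev localizationAtVar (F : Subfield K) (y : K) : Subring K :=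
  fractionSubring ((aeval y : F[X] →ₐ[F] K) : F[X] →+* K) (Ideal.span {X}).primeCompl

variable {F F' : Subfield K} {y : K}

theorem mem_primeCompl_span_X {F : Type*} [Field F] {g : F[X]} :
    g ∈ (Ideal.span {(X : F[X])}).primeCompl ↔ ¬ X ∣ g :=
  Ideal.mem_span_singleton.not

theorem mem_localizationAtVar {x : K} :
    x ∈ localizationAtVar F y ↔ ∃ f g : F[X], ¬ X ∣ g ∧ aeval y f / aeval y g = x := by
  simp only [mem_fractionSubring, mem_primeCompl_span_X, RingHom.coe_coe]

theorem localizationAtVar_mono (h : F ≤ F') : localizationAtVar F y ≤ localizationAtVar F' y := by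
  intro x hx
  obtain ⟨f, g, hg, rfl⟩ := mem_localizationAtVar.1 hx
  have aeval_map (p : F[X]) : aeval y (p.map (Subfield.inclusion h)) = aeval y p := by
    rw [aeval_def, eval₂_map, aeval_def]
    rfl
  refine mem_localizationAtVar.2
    ⟨f.map (Subfield.inclusion h), g.map (Subfield.inclusion h), ?_, by simp only [aeval_map]⟩
  rwa [X_dvd_iff, coeff_map, map_eq_zero, ← X_dvd_iff]

theorem localizationAtVar_le_adjoin :
    localizationAtVar F y ≤ (IntermediateField.adjoin F {y}).toSubfield.toSubring := by
  rintro _ ⟨f, g, -, rfl⟩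
  exact (IntermediateField.mem_adjoin_simple_iff F _).2 ⟨f, g, rfl⟩

theorem toSubring_le_localizationAtVar : F.toSubring ≤ localizationAtVar F y := fun c hc ↦ by
  have hc' : aeval y (C (⟨c, hc⟩ : F)) = c := aeval_C y _
  exact mem_localizationAtVar.2 ⟨C ⟨c, hc⟩, 1, by simp [X_dvd_iff], by rw [hc', map_one, div_one]⟩

theorem isUniformizer_localizationAtVar (hy : Transcendental F y) :
    IsUniformizer (localizationAtVar F y) (IntermediateField.adjoin F {y}).toSubfield y := by
  have ne_zero {p : F[X]} (hp : p ≠ 0) : aeval y p ≠ 0 := mt (transcendental_iff.1 hy p) hp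
  have hy0 : y ≠ 0 := by simpa using ne_zero X_ne_zero
  refine ⟨?_, ?_, ?_, ?_⟩
  · exact mem_localizationAtVar.2 ⟨X, 1, by simp [X_dvd_iff], by simp⟩
  · intro h
    obtain ⟨f, g, hg, hfg⟩ := mem_localizationAtVar.1 h
    have hg0 : aeval y g ≠ 0 := ne_zero (by rintro rfl; exact hg (dvd_zero X))
    refine hg ⟨f, transcendental_iff_injective.1 hy ?_⟩
    rw [map_mul, aeval_X, (div_eq_iff hg0).1 hfg, mul_inv_cancel_left₀ hy0]
  · intro v hv
    obtain ⟨f, g, hg, rfl⟩ := mem_localizationAtVar.1 hv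
    by_cases hf : X ∣ f
    · obtain ⟨f, rfl⟩ := hf
      refine Or.inr (mem_localizationAtVar.2 ⟨f, g, hg, ?_⟩)
      rw [map_mul, aeval_X, mul_div_assoc, inv_mul_cancel_left₀ hy0]
    · exact Or.inl (mem_localizationAtVar.2 ⟨g, f, hf, (inv_div _ _).symm⟩)
  · intro x hx
    obtain ⟨f, g, rfl⟩ := (IntermediateField.mem_adjoin_simple_iff F x).1 hx
    rcases eq_or_ne g 0 with rfl | hg0
    · exact ⟨0, by simp [zero_mem]⟩
    obtain ⟨N, g', hg', rfl⟩ : ∃ N, ∃ g' : F[X], ¬ X ∣ g' ∧ g = X ^ N * g' := by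
      obtain ⟨g', hg, hg'⟩ :=
        (FiniteMultiplicity.of_prime_left prime_X hg0).exists_eq_pow_mul_and_not_dvd
      exact ⟨_, g', hg', hg⟩
    refine ⟨N, mem_localizationAtVar.2 ⟨f, g', hg', ?_⟩⟩
    rw [map_mul, map_pow, aeval_X]
    field_simp

theorem closure_coe_union (F : Subfield K) (S : Set K) :
    Subfield.closure (F ∪ S) = (IntermediateField.adjoin F S).toSubfield := by
  have hF : Set.range (algebraMap F K) = F := Subtype.range_coe
  simp only [IntermediateField.adjoin, hF]

theorem closure_coe_union_singleton (F : Subfield K) (y : K) :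
    (Subring.closure (F ∪ {y}) : Set K) = Set.range (aeval y : F[X] →ₐ[F] K) := by
  have hF : Set.range (algebraMap F K) = F := Subtype.range_coe
  rw [← AlgHom.coe_range, ← Algebra.adjoin_singleton_eq_range_aeval, ← Subalgebra.coe_toSubring,
    Algebra.adjoin_eq_ring_closure, hF]

end LocalizationAtVariable

section PrimeIdeals

variable {K : Type*} [Field K] {D D' : Subring K}

theorem notMem_iff_inv_mem_locAtPrime {q : Ideal D} [q.IsPrime] {a : D} :
    a ∉ q ↔ (a : K) ≠ 0 ∧ (a : K)⁻¹ ∈ locAtPrime q := by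
  refine ⟨fun ha ↦ ⟨fun h ↦ ha ?_, inv_map_mem_fractionSubring D.subtype ha⟩, fun ⟨h0, h⟩ ↦ ?_⟩
  · exact (Subtype.ext h : a = 0) ▸ q.zero_mem
  · refine (IsLocalization.AtPrime.isUnit_to_map_iff (locAtPrime q) q a).1 ?_
    exact .of_mul_eq_one ⟨_, h⟩ (Subtype.ext (mul_inv_cancel₀ h0))

theorem eq_of_locAtPrime_eq {q₁ q₂ : Ideal D} [q₁.IsPrime] [q₂.IsPrime]
    (h : locAtPrime q₁ = locAtPrime q₂) : q₁ = q₂ := by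
  ext a
  rw [← not_iff_not, notMem_iff_inv_mem_locAtPrime, notMem_iff_inv_mem_locAtPrime, h]

theorem val_image_inter_eq_iff {q : Ideal D'} {q' : Ideal D} (hD : D ≤ D') :
    Subtype.val '' (q : Set D') ∩ D = Subtype.val '' (q' : Set D) ↔
      q.comap (Subring.inclusion hD) = q' := by
  have himage : Subtype.val '' (q : Set D') ∩ D =
      Subtype.val '' (q.comap (Subring.inclusion hD) : Set D) := by
    ext x
    constructor
    · rintro ⟨⟨a, ha, rfl⟩, hx⟩
      exact ⟨⟨a, hx⟩, ha, rfl⟩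
    · rintro ⟨a, ha, rfl⟩
      exact ⟨⟨_, ha, rfl⟩, a.2⟩
  rw [himage, Subtype.val_injective.image_injective.eq_iff, SetLike.coe_set_eq]

end PrimeIdeals

noncomputable section Tower

variable (k0 : Type) [Field k0] (r : ℕ)

section SetModels

variable {k0 r} {D W : Subring (Amb k0 r)}

theorem locAt_val_image (q : Ideal D) [q.IsPrime] :
    locAt k0 r D (Subtype.val '' (q : Set D)) = locAtPrime q := by
  ext x
  constructor
  · rintro ⟨a, ha, b, hb, hbq, rfl⟩
    exact ⟨⟨a, ha⟩, ⟨b, hb⟩, fun h ↦ hbq ⟨_, h, rfl⟩, rfl⟩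
  · rintro ⟨a, s, hs, rfl⟩
    refine ⟨a, a.2, s, s.2, ?_, rfl⟩
    rintro ⟨b, hb, hbs⟩
    exact hs (Subtype.ext hbs ▸ hb)

theorem unitContent_map_subtype_iff {g : W[X]} :
    unitContent k0 r W (g.map W.subtype) ↔ g ∈ unitContentSubmonoid W := by
  rw [mem_unitContentSubmonoid, Ideal.eq_top_iff_one]
  constructor
  · rintro ⟨t, u, hu, h⟩
    have hsum : ∑ i : t, ⟨u i, hu i i.2⟩ * g.coeff i = 1 := Subtype.ext <| by
      simpa [← Finset.sum_coe_sort t] using h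
    exact hsum ▸ sum_mem fun i _ ↦ Ideal.mul_mem_left _ _ (g.coeff_mem_contentIdeal i)
  · intro h
    have hcoeffs : (g.coeffs : Set W) = g.coeff '' g.support := by
      ext c
      simp [mem_coeffs_iff, eq_comm]
    rw [contentIdeal_def, hcoeffs, Ideal.span, Submodule.mem_span_image_finset_iff_exists_fun'] at h
    obtain ⟨u, hu⟩ := h
    refine ⟨g.support, fun i ↦ u i, fun i _ ↦ (u i).2, ?_⟩
    simpa using congrArg Subtype.val hu

theorem nagataSet_coe (W : Subring (Amb k0 r)) (T : Amb k0 r) :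
    nagataSet k0 r W T = nagataRing W T := by
  ext x
  constructor
  · rintro ⟨f, g, hf, hg, hgu, rfl⟩
    obtain ⟨f, rfl⟩ := exists_map_subtype_eq hf
    obtain ⟨g, rfl⟩ := exists_map_subtype_eq hg
    refine ⟨f, g, unitContent_map_subtype_iff.1 hgu, ?_⟩
    simp only [eval_map_subtype, RingHom.coe_coe]
  · rintro ⟨f, g, hg, rfl⟩
    refine ⟨f.map W.subtype, g.map W.subtype, ?_, ?_, unitContent_map_subtype_iff.2 hg, ?_⟩
    · simp
    · simp
    · simp only [eval_map_subtype, RingHom.coe_coe]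

theorem krSet_coe (D : Subring (Amb k0 r)) (L : Subfield (Amb k0 r)) (T : Amb k0 r) :
    krSet k0 r D L T = kroneckerRing D L T := by
  ext x
  simp only [krSet, Set.mem_iInter, nagataSet_coe, SetLike.mem_coe, mem_kroneckerRing]
  exact forall_congr' fun W ↦ imp_congr_left
    ⟨fun ⟨hD, hL, h⟩ ↦ ⟨hD, hL, h⟩, fun ⟨hD, hL, h⟩ ↦ ⟨hD, hL, h⟩⟩

end SetModels

section Variables

/-- The indeterminate with index `i`, as an element of the ambient field. -/
def ambVar (i : TowerVars r) : Amb k0 r :=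
  algebraMap (MvPolynomial (TowerVars r) k0) (Amb k0 r) (MvPolynomial.X i)

/-- The subfield of the ambient field generated over `k0` by all indeterminates except `i`. -/
def adjoinVarsExcept (i : TowerVars r) : Subfield (Amb k0 r) :=
  (IntermediateField.adjoin k0 (ambVar k0 r '' {i}ᶜ)).toSubfield

theorem algebraicIndependent_ambVar : AlgebraicIndependent k0 (ambVar k0 r) :=
  (MvPolynomial.algebraicIndependent_X (TowerVars r) k0).map'
    (f := IsScalarTower.toAlgHom k0 (MvPolynomial (TowerVars r) k0) (Amb k0 r))
    (IsFractionRing.injective _ _)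

theorem transcendental_ambVar (i : TowerVars r) :
    Transcendental (adjoinVarsExcept k0 r i) (ambVar k0 r i) :=
  mt IntermediateField.isAlgebraic_adjoin_iff.1
    ((algebraicIndependent_ambVar k0 r).transcendental_adjoin (s := {i}ᶜ) (by simp))

variable {k0 r} in
theorem ambVar_mem_adjoinVarsExcept {i j : TowerVars r} (h : j ≠ i) :
    ambVar k0 r j ∈ adjoinVarsExcept k0 r i :=
  IntermediateField.subset_adjoin k0 _ ⟨j, h, rfl⟩

variable {k0 r} in
theorem Ffld_le_adjoinVarsExcept {n : ℕ} {i : TowerVars r} (hX : ∀ j ≤ n, Sum.inl j ≠ i)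
    (hZ : ∀ j, Sum.inr (Sum.inr j) ≠ i) : Ffld k0 r n ≤ adjoinVarsExcept k0 r i := by
  rw [Ffld, kfld, Subfield.closure_le, Set.union_subset_iff, SetLike.coe_subset_coe,
    Subfield.closure_le, Set.union_subset_iff]
  refine ⟨⟨?_, ?_⟩, ?_⟩
  · rintro _ ⟨c, rfl⟩
    exact (IntermediateField.adjoin k0 (ambVar k0 r '' {i}ᶜ)).algebraMap_mem c
  · rintro _ ⟨j, -, hj, rfl⟩
    exact ambVar_mem_adjoinVarsExcept (hX j hj)
  · rintro _ ⟨j, rfl⟩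
    exact ambVar_mem_adjoinVarsExcept (hZ j)

theorem transcendental_ambY (n : ℕ) : Transcendental (Ffld k0 r n) (ambY k0 r) :=
  transcendental_of_le (W := (Ffld k0 r n).toSubring)
    (Ffld_le_adjoinVarsExcept (by simp) (by simp))
    (transcendental_ambVar k0 r (Sum.inr (Sum.inl ())))

theorem ambY_ne_zero : ambY k0 r ≠ 0 := fun h ↦
  transcendental_ambY k0 r 0 (h ▸ isAlgebraic_zero)

theorem ambY_mem_Kfld (n : ℕ) : ambY k0 r ∈ Kfld k0 r n :=
  Subfield.subset_closure (Or.inr rfl)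

theorem transcendental_ambX_succ (n : ℕ) : Transcendental (Kfld k0 r n) (ambX k0 r (n + 1)) := by
  refine transcendental_of_le (W := (Kfld k0 r n).toSubring) ?_
    (transcendental_ambVar k0 r (Sum.inl (n + 1)))
  change Kfld k0 r n ≤ _
  rw [Kfld, Subfield.closure_le, Set.union_subset_iff, SetLike.coe_subset_coe,
    Set.singleton_subset_iff]
  refine ⟨Ffld_le_adjoinVarsExcept (fun j hj ↦ ?_) (by simp), ambVar_mem_adjoinVarsExcept (by simp)⟩
  exact Sum.inl_injective.ne (by lia)

theorem ambX'_eq (n : ℕ) : ambX' k0 r n = ambX k0 r n + (ambY k0 r)⁻¹ := by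
  have := ambY_ne_zero k0 r
  rw [ambX']
  field_simp
  ring

theorem transcendental_ambX'_succ (n : ℕ) : Transcendental (Kfld k0 r n) (ambX' k0 r (n + 1)) := by
  have hY : IsAlgebraic (Kfld k0 r n) (ambY k0 r)⁻¹ :=
    isAlgebraic_algebraMap (⟨_, inv_mem (ambY_mem_Kfld k0 r n)⟩ : Kfld k0 r n)
  intro h
  refine transcendental_ambX_succ k0 r n ?_
  rw [← add_sub_cancel_right (ambX k0 r (n + 1)) (ambY k0 r)⁻¹, ← ambX'_eq]
  exact h.sub hY

end Variables

section Fields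

theorem kfld_mono : Monotone (kfld k0 r) := fun _ _ h ↦ Subfield.closure_mono <|
  Set.union_subset_union_right _ fun _ ⟨i, hi, hin, hx⟩ ↦ ⟨i, hi, hin.trans h, hx⟩

theorem Ffld_mono : Monotone (Ffld k0 r) := fun _ _ h ↦ Subfield.closure_mono <|
  Set.union_subset_union_left _ (kfld_mono k0 r h)

theorem Kfld_mono : Monotone (Kfld k0 r) := fun _ _ h ↦ Subfield.closure_mono <|
  Set.union_subset_union_left _ (Ffld_mono k0 r h)

theorem kfld_le_Ffld (n : ℕ) : kfld k0 r n ≤ Ffld k0 r n :=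
  fun _ hx ↦ Subfield.subset_closure (Or.inl hx)

theorem Ffld_le_Kfld (n : ℕ) : Ffld k0 r n ≤ Kfld k0 r n :=
  fun _ hx ↦ Subfield.subset_closure (Or.inl hx)

theorem ambX_mem_kfld {i n : ℕ} (hi : 1 ≤ i) (hin : i ≤ n) : ambX k0 r i ∈ kfld k0 r n :=
  Subfield.subset_closure (Or.inr ⟨i, hi, hin, rfl⟩)

theorem ambX_succ_mem_Ffld (n : ℕ) : ambX k0 r (n + 1) ∈ Ffld k0 r (n + 1) :=
  kfld_le_Ffld k0 r _ (ambX_mem_kfld k0 r n.succ_pos le_rfl)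

theorem ambX'_succ_mem_Kfld (n : ℕ) : ambX' k0 r (n + 1) ∈ Kfld k0 r (n + 1) := by
  rw [ambX'_eq]
  exact add_mem (Ffld_le_Kfld k0 r _ (ambX_succ_mem_Ffld k0 r n)) (inv_mem (ambY_mem_Kfld k0 r _))

theorem adjoin_ambX'_succ (n : ℕ) :
    (IntermediateField.adjoin (Kfld k0 r n) {ambX' k0 r (n + 1)}).toSubfield =
      Kfld k0 r (n + 1) := by
  rw [← closure_coe_union]
  set L := Subfield.closure (Kfld k0 r n ∪ {ambX' k0 r (n + 1)})
  have hK : Kfld k0 r n ≤ L := fun x hx ↦ Subfield.subset_closure (Or.inl hx)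
  have hX : ambX k0 r (n + 1) ∈ L := by
    rw [← add_sub_cancel_right (ambX k0 r (n + 1)) (ambY k0 r)⁻¹, ← ambX'_eq]
    exact sub_mem (Subfield.subset_closure (Or.inr rfl)) (inv_mem (hK (ambY_mem_Kfld k0 r n)))
  have hF : Ffld k0 r n ≤ L := (Ffld_le_Kfld k0 r n).trans hK
  apply le_antisymm
  · rw [Subfield.closure_le, Set.union_subset_iff, Set.singleton_subset_iff]
    exact ⟨Kfld_mono k0 r n.le_succ, ambX'_succ_mem_Kfld k0 r n⟩
  · rw [Kfld, Ffld, kfld]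
    simp only [Subfield.closure_le, Set.union_subset_iff, SetLike.coe_subset_coe,
      Set.singleton_subset_iff]
    refine ⟨⟨⟨?_, ?_⟩, ?_⟩, hK (ambY_mem_Kfld k0 r n)⟩
    · exact fun x hx ↦ hF (kfld_le_Ffld k0 r n (Subfield.subset_closure (Or.inl hx)))
    · rintro _ ⟨i, hi, hin, rfl⟩
      rcases hin.lt_or_eq with hin | rfl
      · exact hF (kfld_le_Ffld k0 r n (ambX_mem_kfld k0 r hi (Nat.lt_succ_iff.1 hin)))
      · exact hX
    · exact fun x hx ↦ hF (Subfield.subset_closure (Or.inr hx))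

end Fields

section Rings

/-- The ring `Vₙ = Fₙ[Y]_(Y)` as a subring of the ambient field. -/
abbrev vRing (n : ℕ) : Subring (Amb k0 r) :=
  localizationAtVar (Ffld k0 r n) (ambY k0 r)

theorem Vset_eq (n : ℕ) : Vset k0 r n = vRing k0 r n := by
  have mem_polyRing {x} :
      x ∈ polyRing k0 r n ↔ ∃ f : (Ffld k0 r n)[X], aeval (ambY k0 r) f = x := by
    rw [← SetLike.mem_coe, polyRing, closure_coe_union_singleton, Set.mem_range]
  have hinj := transcendental_iff_injective.1 (transcendental_ambY k0 r n)
  have dvd_iff {g : (Ffld k0 r n)[X]} :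
      X ∣ g ↔ ∃ h ∈ polyRing k0 r n, aeval (ambY k0 r) g = ambY k0 r * h := by
    refine ⟨fun ⟨h, hg⟩ ↦ ⟨_, mem_polyRing.2 ⟨h, rfl⟩, by rw [hg, map_mul, aeval_X]⟩, ?_⟩
    rintro ⟨_, hh, hg⟩
    obtain ⟨h, rfl⟩ := mem_polyRing.1 hh
    exact ⟨h, hinj (by rw [hg, map_mul, aeval_X])⟩
  ext x
  rw [SetLike.mem_coe, mem_localizationAtVar]
  constructor
  · rintro ⟨_, hf, _, hg, hdvd, rfl⟩
    obtain ⟨f, rfl⟩ := mem_polyRing.1 hf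
    obtain ⟨g, rfl⟩ := mem_polyRing.1 hg
    exact ⟨f, g, dvd_iff.not.2 hdvd, rfl⟩
  · rintro ⟨f, g, hg, rfl⟩
    exact ⟨_, mem_polyRing.2 ⟨f, rfl⟩, _, mem_polyRing.2 ⟨g, rfl⟩, dvd_iff.not.1 hg, rfl⟩

theorem Mset_eq (n : ℕ) : Mset k0 r n = ambY k0 r • (vRing k0 r n : Set (Amb k0 r)) := by
  ext x
  rw [Mset, Vset_eq]
  exact exists_congr fun v ↦ and_congr_right fun _ ↦ eq_comm

theorem exists_inv_ambX'_succ_eq_mul_units (n : ℕ) : ∃ u : (vRing k0 r (n + 1))ˣ,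
    (ambX' k0 r (n + 1))⁻¹ = ambY k0 r * (u : vRing k0 r (n + 1)) := by
  let p : (Ffld k0 r (n + 1))[X] := 1 + X * C ⟨_, ambX_succ_mem_Ffld k0 r n⟩
  have hpX : ¬ X ∣ p := by simp [p, X_dvd_iff]
  have hp0 : aeval (ambY k0 r) p ≠ 0 :=
    mt (transcendental_iff.1 (transcendental_ambY k0 r (n + 1)) p) fun h ↦ hpX (h ▸ dvd_zero X)
  have hpY : aeval (ambY k0 r) p = 1 + ambY k0 r * ambX k0 r (n + 1) := by
    simp only [p, map_add, map_one, map_mul, aeval_X, aeval_C]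
    rfl
  let w : vRing k0 r (n + 1) := ⟨_, inv_map_mem_fractionSubring _ (mem_primeCompl_span_X.2 hpX)⟩
  have hw : w * ⟨_, map_mem_fractionSubring _ _ p⟩ = 1 := Subtype.ext (inv_mul_cancel₀ hp0)
  refine ⟨.mkOfMulEqOne w _ hw, ?_⟩
  rw [ambX', inv_div, div_eq_mul_inv, ← hpY]
  rfl

theorem isUniformizer_inv_ambX' (n : ℕ) :
    IsUniformizer (vRing k0 r (n + 1)) (Kfld k0 r (n + 1)) (ambX' k0 r (n + 1))⁻¹ := by
  obtain ⟨u, hu⟩ := exists_inv_ambX'_succ_eq_mul_units k0 r n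
  rw [hu, Kfld, closure_coe_union]
  exact (isUniformizer_localizationAtVar (transcendental_ambY k0 r (n + 1))).mul_units u

theorem Mset_succ_eq (n : ℕ) :
    Mset k0 r (n + 1) = (ambX' k0 r (n + 1))⁻¹ • (vRing k0 r (n + 1) : Set (Amb k0 r)) := by
  obtain ⟨u, hu⟩ := exists_inv_ambX'_succ_eq_mul_units k0 r n
  rw [Mset_eq, hu, mul_units_smul_coe]

theorem kfld_le_vRing (n : ℕ) : (kfld k0 r n).toSubring ≤ vRing k0 r n :=
  (show (kfld k0 r n).toSubring ≤ (Ffld k0 r n).toSubring from kfld_le_Ffld k0 r n).trans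
    toSubring_le_localizationAtVar

/-- The ring `Aₙ₊₁ = kₙ₊₁ + Mₙ₊₁` as a subring of the ambient field, where `Mₙ₊₁ = Y Vₙ₊₁` is
generated by the uniformizer `X′ₙ₊₁⁻¹` instead of `Y`. -/
abbrev aRing (n : ℕ) : Subring (Amb k0 r) :=
  addPrincipal (kfld k0 r (n + 1)) (kfld_le_vRing k0 r (n + 1)) (isUniformizer_inv_ambX' k0 r n).mem

theorem coe_aRing (n : ℕ) : (aRing k0 r n : Set (Amb k0 r)) = Aset k0 r (n + 1) := by
  ext x
  rw [Aset, Mset_succ_eq]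
  constructor
  · rintro ⟨c, hc, v, hv, rfl⟩
    exact ⟨c, hc, _, ⟨v, hv, rfl⟩, rfl⟩
  · rintro ⟨c, hc, _, ⟨v, hv, rfl⟩, rfl⟩
    exact ⟨c, hc, v, hv, rfl⟩

theorem aRing_le_succ (n : ℕ) : aRing k0 r n ≤ aRing k0 r (n + 1) := by
  rw [← SetLike.coe_subset_coe, coe_aRing, coe_aRing]
  rintro _ ⟨c, hc, m, hm, rfl⟩
  refine ⟨c, kfld_mono k0 r (n + 1).le_succ hc, m, ?_, rfl⟩
  rw [Mset_eq] at hm ⊢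
  exact Set.smul_set_mono (localizationAtVar_mono (Ffld_mono k0 r (n + 1).le_succ)) hm

theorem aRing_le_Kfld (n : ℕ) : aRing k0 r n ≤ (Kfld k0 r (n + 1)).toSubring := by
  refine addPrincipal_le.trans ?_
  rw [Kfld, closure_coe_union]
  exact localizationAtVar_le_adjoin

/-- The ring `Bₙ₊₁` as a subring of the ambient field, with the convention `B₁ = K₁`, which makes
`D₁ = B₁ ∩ A₁` an instance of the formula defining the other levels. -/
def bRing : ℕ → Subring (Amb k0 r)
  | 0 => (Kfld k0 r 1).toSubring
  | n + 1 => kroneckerRing (bRing n ⊓ aRing k0 r n) (Kfld k0 r (n + 1)) (ambX' k0 r (n + 2))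

/-- The ring `Dₙ₊₁` as a subring of the ambient field. -/
abbrev dRing (n : ℕ) : Subring (Amb k0 r) := bRing k0 r n ⊓ aRing k0 r n

theorem dRing_le_Kfld (n : ℕ) : dRing k0 r n ≤ (Kfld k0 r (n + 1)).toSubring :=
  inf_le_right.trans (aRing_le_Kfld k0 r n)

theorem coe_dRing (n : ℕ) : (dRing k0 r n : Set (Amb k0 r)) = Dset k0 r (n + 1) := by
  induction n with
  | zero => rw [dRing, bRing, inf_eq_right.2 (aRing_le_Kfld k0 r 0), coe_aRing]; rfl
  | succ n ih => rw [dRing, bRing, Subring.coe_inf, ← krSet_coe, ih, coe_aRing]; rfl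

theorem dRing_le_succ (n : ℕ) : dRing k0 r n ≤ dRing k0 r (n + 1) :=
  le_inf le_kroneckerRing (inf_le_right.trans (aRing_le_succ k0 r n))

theorem hasComaximalFractions_bRing (n : ℕ) :
    HasComaximalFractions (bRing k0 r n) (Kfld k0 r (n + 1)) (ambX' k0 r (n + 1))⁻¹ := by
  cases n with
  | zero =>
    have ht := isUniformizer_inv_ambX' k0 r 0
    refine hasComaximalFractions_toSubring (inv_mem (ambX'_succ_mem_Kfld k0 r 0)) ht.ne_zero ?_
    intro h
    exact ht.inv_notMem (by rw [h, inv_one]; exact one_mem _)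
  | succ n =>
    rw [← adjoin_ambX'_succ k0 r (n + 1)]
    exact hasComaximalFractions_kroneckerRing (dRing_le_Kfld k0 r n)
      (transcendental_ambX'_succ k0 r (n + 1))

theorem val_image_eq_MMset_iff {n : ℕ} (q : Ideal (dRing k0 r n)) [q.IsPrime] :
    Subtype.val '' (q : Set (dRing k0 r n)) = MMset k0 r (n + 1) ↔
      (ambX' k0 r (n + 1))⁻¹ ∈ Subtype.val '' (q : Set (dRing k0 r n)) := by
  rw [MMset, Mset_succ_eq, ← coe_dRing]
  exact val_image_eq_smul_inter_iff (hasComaximalFractions_bRing k0 r n)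
    (isUniformizer_inv_ambX' k0 r n)

theorem bRing_le_locAtPrime {n : ℕ} {q : Ideal (dRing k0 r n)} [q.IsPrime]
    (hq : Subtype.val '' (q : Set (dRing k0 r n)) ≠ MMset k0 r (n + 1)) :
    bRing k0 r n ≤ locAtPrime q :=
  le_locAtPrime_of_notMem (hasComaximalFractions_bRing k0 r n) (isUniformizer_inv_ambX' k0 r n)
    (mt (val_image_eq_MMset_iff k0 r q).2 hq)

theorem isValuationRingOf_locAtPrime_dRing {n : ℕ} {q : Ideal (dRing k0 r n)} [q.IsPrime]
    (hq : Subtype.val '' (q : Set (dRing k0 r n)) ≠ MMset k0 r (n + 1)) :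
    IsValuationRingOf (locAtPrime q) (Kfld k0 r (n + 1)) :=
  isValuationRingOf_locAtPrime (hasComaximalFractions_bRing k0 r n) (isUniformizer_inv_ambX' k0 r n)
    (mt (val_image_eq_MMset_iff k0 r q).2 hq)

end Rings

end Tower

/-- In the tower construction, for every `n ≥ 2` and every prime ideal
`q′` of `D_{n-1}` with `q′ ≠ 𝓜_{n-1}`, there is a unique prime ideal `q ≠ 𝓜ₙ` of
`Dₙ` with `q ∩ D_{n-1} = q′`, and moreover `(Dₙ)_q = (D_{n-1})_{q′}(X′ₙ)`, the Nagata
ring of `(D_{n-1})_{q′}` in the variable `X′ₙ`. -/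
theorem tower_unique_prime_over_previous_level
    (k0 : Type) [Field k0] (r : ℕ) (hr : 2 ≤ r) (n : ℕ) (hn : 2 ≤ n) :
    ∀ D' Dp : Subring (Amb k0 r),
      (D' : Set (Amb k0 r)) = Dset k0 r n → (Dp : Set (Amb k0 r)) = Dset k0 r (n - 1) →
      ∀ q' : Ideal ↥Dp, q'.IsPrime →
        Subtype.val '' (q' : Set ↥Dp) ≠ MMset k0 r (n - 1) →
        ∃ q : Ideal ↥D', q.IsPrime ∧
          Subtype.val '' (q : Set ↥D') ≠ MMset k0 r n ∧
          Subtype.val '' (q : Set ↥D') ∩ Dset k0 r (n - 1) = Subtype.val '' (q' : Set ↥Dp) ∧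
          (∀ q₂ : Ideal ↥D', q₂.IsPrime →
            Subtype.val '' (q₂ : Set ↥D') ≠ MMset k0 r n →
            Subtype.val '' (q₂ : Set ↥D') ∩ Dset k0 r (n - 1) =
              Subtype.val '' (q' : Set ↥Dp) →
            q₂ = q) ∧
          locAt k0 r (Dset k0 r n) (Subtype.val '' (q : Set ↥D')) =
            nagataSet k0 r
              (locAt k0 r (Dset k0 r (n - 1)) (Subtype.val '' (q' : Set ↥Dp)))
              (ambX' k0 r n) := by
  obtain ⟨n, rfl⟩ := Nat.exists_eq_add_of_le' hn
  intro D' D hD' hD q' hq' hq'M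
  obtain rfl : D' = dRing k0 r (n + 1) := SetLike.coe_injective (hD'.trans (coe_dRing k0 r _).symm)
  obtain rfl : D = dRing k0 r n := SetLike.coe_injective (hD.trans (coe_dRing k0 r _).symm)
  rw [← hD', ← hD]
  have hle := dRing_le_succ k0 r n
  have hT := transcendental_ambX'_succ k0 r (n + 1)
  have hV := isValuationRingOf_locAtPrime_dRing k0 r hq'M
  have hloc {q : Ideal (dRing k0 r (n + 1))} (hq : q.IsPrime)
      (hqM : Subtype.val '' (q : Set (dRing k0 r (n + 1))) ≠ MMset k0 r (n + 2))
      (hqq' : q.comap (Subring.inclusion hle) = q') :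
      locAtPrime q = nagataRing (locAtPrime q') (ambX' k0 r (n + 2)) :=
    locAtPrime_eq_nagataRing hle hqq' hT hV inf_le_left (bRing_le_locAtPrime k0 r hqM)
  obtain ⟨q, hq, hqT, hqq'⟩ := exists_isPrime_comap_eq hle hT hV inf_le_left
  have hqM := mt (val_image_eq_MMset_iff k0 r q).1 hqT
  refine ⟨q, hq, hqM, (val_image_inter_eq_iff hle).2 hqq', fun q₂ hq₂ hq₂M hq₂q' ↦ ?_, ?_⟩
  · rw [val_image_inter_eq_iff hle] at hq₂q'
    exact eq_of_locAtPrime_eq ((hloc hq₂ hq₂M hq₂q').trans (hloc hq hqM hqq').symm)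
  · rw [locAt_val_image, locAt_val_image, nagataSet_coe, hloc hq hqM hqq']
end

section
/- In the tower construction, set D := ⋃_{n≥1} Dₙ and 𝓜 := ⋃_{n≥2} 𝓜ₙ. Then D_𝓜 = A = k + M, and 𝓜 is a height-one maximal ideal of D. -/
/-!
The heart of the proof is a density property: every `x ∈ A` admits `m ∈ M` with `1 + m` and
`(1 + m) x` both in `D`. Put `T = X′ₙ`, write `x = f(T) / g(T)` with `f`, `g` over `Kₙ₋₁`, and let
`N > deg f`. Since `T⁻¹ = Y / (1 + Y Xₙ) ∈ M`, the element `(1 + T⁻ᴺ x)⁻¹ = Tᴺ g / (Tᴺ g + f)`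
belongs to `1 + M`. The coefficients of `f` and of `g` all occur in `Tᴺ g + f`, so over every
valuation overring the contents of `Tᴺ g` and `Tᴺ f` lie in the content of `Tᴺ g + f`; hence
`1 + m = Tᴺ g / (Tᴺ g + f)` and `(1 + m) x = Tᴺ f / (Tᴺ g + f)` lie in the Kronecker function ring.

Density gives `D_𝓜 = A` at once, because elements of `A` outside `M` are units of `A`. Applied
to `b⁻¹` with `b ∈ D ∖ 𝓜`, it gives `1 ∈ b D + 𝓜`. Finally, for `0 ≠ q ∈ 𝓜` and `z ∈ 𝓜` some
`z ^ j / q` lies in `M`, because `V = F[Y]_(Y)` has uniformizer `Y`; density then gives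
`(1 + m) z ^ j ∈ q D`, so a prime contained in `𝓜` and containing `q` is `𝓜`.
-/

namespace KroneckerTower

open Polynomial
open scoped Pointwise

section KPlusM

variable {E : Type*} [Field E] {k : Subfield E} {V : Subring E} {M : Submodule V E}

/-- The classical `k + M` situation inside a field `E`: `M` is a proper ideal of the subring `V`
contained in its Jacobson radical, and `k` is a field contained in `V`. The ring `k + M` is the
pointwise sum of the underlying sets. -/
structure IsKPlusM (k : Subfield E) (V : Subring E) (M : Submodule V E) : Prop where
  mem_of_mem_field : ∀ c ∈ k, c ∈ V
  mem_of_mem_ideal : ∀ m ∈ M, m ∈ V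
  one_notMem : (1 : E) ∉ M
  inv_one_add_mem : ∀ m ∈ M, (1 + m)⁻¹ ∈ V

/-- `D` is dense in `A` along `1 + M`: every element of `A` is a fraction with numerator in `D`
and denominator in `D ∩ (1 + M)`. -/
def OneAddDense (M D A : Set E) : Prop :=
  ∀ x ∈ A, ∃ m ∈ M, 1 + m ∈ D ∧ (1 + m) * x ∈ D

theorem mul_mem_ideal {v m : E} (hv : v ∈ V) (hm : m ∈ M) : v * m ∈ M :=
  M.smul_mem ⟨v, hv⟩ hm

namespace IsKPlusM

theorem one_add_notMem (h : IsKPlusM k V M) {m : E} (hm : m ∈ M) : 1 + m ∉ M := fun h1 =>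
  h.one_notMem (by simpa using M.sub_mem h1 hm)

theorem one_add_ne_zero (h : IsKPlusM k V M) {m : E} (hm : m ∈ M) : 1 + m ≠ 0 := fun h0 =>
  h.one_add_notMem hm (h0 ▸ M.zero_mem)

theorem exists_inv_one_add_eq (h : IsKPlusM k V M) {m : E} (hm : m ∈ M) :
    ∃ m' ∈ M, (1 + m)⁻¹ = 1 + m' := by
  have hne := h.one_add_ne_zero hm
  refine ⟨-((1 + m)⁻¹ * m), M.neg_mem (mul_mem_ideal (h.inv_one_add_mem m hm) hm), ?_⟩
  field_simp
  ring

theorem add_subset (h : IsKPlusM k V M) : (k : Set E) + M ⊆ V := by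
  rintro _ ⟨c, hc, m, hm, rfl⟩
  exact V.add_mem (h.mem_of_mem_field c hc) (h.mem_of_mem_ideal m hm)

theorem mul_mem_add (h : IsKPlusM k V M) {x y : E} (hx : x ∈ (k : Set E) + M)
    (hy : y ∈ (k : Set E) + M) : x * y ∈ (k : Set E) + M := by
  have hxV := h.add_subset hx
  obtain ⟨c, hc, m, hm, rfl⟩ := hx
  obtain ⟨c', hc', m', hm', rfl⟩ := hy
  refine ⟨c * c', k.mul_mem hc hc', (c + m) * m' + c' * m, ?_, by ring⟩
  exact M.add_mem (mul_mem_ideal hxV hm') (mul_mem_ideal (h.mem_of_mem_field c' hc') hm)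

theorem inv_mem_add (h : IsKPlusM k V M) {x : E} (hx : x ∈ (k : Set E) + M) (hxM : x ∉ M) :
    x⁻¹ ∈ (k : Set E) + M := by
  obtain ⟨c, hc, m, hm, rfl⟩ := hx
  have hc0 : c ≠ 0 := by
    rintro rfl
    exact hxM (by simpa using hm)
  have hcV := h.mem_of_mem_field _ (k.inv_mem hc)
  obtain ⟨m', hm', hinv⟩ := h.exists_inv_one_add_eq (mul_mem_ideal hcV hm)
  refine ⟨c⁻¹, k.inv_mem hc, c⁻¹ * m', mul_mem_ideal hcV hm', ?_⟩
  calc c⁻¹ + c⁻¹ * m' = c⁻¹ * (1 + c⁻¹ * m)⁻¹ := by rw [hinv]; ring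
    _ = (c + m)⁻¹ := by rw [← mul_inv]; congr 1; field_simp

theorem fractions_eq_add (h : IsKPlusM k V M) {D : Set E} (hDA : D ⊆ (k : Set E) + M)
    (hdense : OneAddDense (M : Set E) D ((k : Set E) + M)) :
    {x | ∃ a ∈ D, ∃ b ∈ D, b ∉ (M : Set E) ∩ D ∧ x = a / b} = (k : Set E) + M := by
  ext x
  constructor
  · rintro ⟨a, ha, b, hb, hbM, rfl⟩
    rw [div_eq_mul_inv]
    exact h.mul_mem_add (hDA ha) (h.inv_mem_add (hDA hb) fun hM => hbM ⟨hM, hb⟩)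
  · intro hx
    obtain ⟨m, hm, hden, hnum⟩ := hdense x hx
    exact ⟨_, hnum, _, hden, fun hM => h.one_add_notMem hm hM.1,
      (mul_div_cancel_left₀ x (h.one_add_ne_zero hm)).symm⟩

section Contraction

variable {D : Subring E} {I : Ideal D}

theorem isMaximal_contraction (h : IsKPlusM k V M) (hDA : (D : Set E) ⊆ (k : Set E) + M)
    (hdense : OneAddDense (M : Set E) (D : Set E) ((k : Set E) + M))
    (hI : ∀ x : D, x ∈ I ↔ (x : E) ∈ M) :
    I.IsMaximal := by
  refine Ideal.isMaximal_iff.2 ⟨fun h1 => h.one_notMem ((hI 1).1 h1), fun J b hIJ hbI hbJ => ?_⟩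
  have hbM : (b : E) ∉ M := fun hM => hbI ((hI b).2 hM)
  have hb0 : (b : E) ≠ 0 := fun h0 => hbM (h0 ▸ M.zero_mem)
  obtain ⟨m, hm, -, hmul⟩ := hdense _ (h.inv_mem_add (hDA b.2) hbM)
  let y : D := ⟨(1 + m) * (b : E)⁻¹, hmul⟩
  have hyb : y * b - 1 ∈ I := by
    refine (hI _).2 ?_
    have : ((y * b - 1 : D) : E) = m := by simp [y, hb0]
    rwa [this]
  simpa using J.sub_mem (J.mul_mem_left y hbJ) (hIJ hyb)

theorem contraction_ne_bot (h : IsKPlusM k V M)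
    (hdense : OneAddDense (M : Set E) (D : Set E) ((k : Set E) + M))
    (hI : ∀ x : D, x ∈ I ↔ (x : E) ∈ M) {y : E} (hy : y ∈ M) (hy0 : y ≠ 0) : I ≠ ⊥ := by
  obtain ⟨m, hm, -, hmul⟩ := hdense y ⟨0, k.zero_mem, y, hy, zero_add y⟩
  have hmem : (⟨(1 + m) * y, hmul⟩ : D) ∈ I := (hI _).2 <|
    mul_mem_ideal (V.add_mem V.one_mem (h.mem_of_mem_ideal m hm)) hy
  intro hbot
  rw [hbot, Ideal.mem_bot, Subtype.ext_iff] at hmem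
  exact mul_ne_zero (h.one_add_ne_zero hm) hy0 hmem

theorem eq_bot_of_lt_contraction (h : IsKPlusM k V M)
    (hdense : OneAddDense (M : Set E) (D : Set E) ((k : Set E) + M))
    (hI : ∀ x : D, x ∈ I ↔ (x : E) ∈ M)
    (hM : ∀ q ∈ M, q ≠ 0 → ∀ z ∈ M, ∃ j : ℕ, z ^ j / q ∈ M)
    {Q : Ideal D} (hQ : Q.IsPrime) (hQI : Q < I) : Q = ⊥ := by
  by_contra hne
  obtain ⟨q, hqQ, hq0⟩ := Submodule.exists_mem_ne_zero_of_ne_bot hne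
  have hq0' : (q : E) ≠ 0 := fun h0 => hq0 (Subtype.ext h0)
  refine hQI.not_ge fun z hz => ?_
  obtain ⟨j, hj⟩ := hM q ((hI q).1 (hQI.le hqQ)) hq0' z ((hI z).1 hz)
  obtain ⟨m, hm, hden, hnum⟩ := hdense _ ⟨0, k.zero_mem, _, hj, zero_add _⟩
  let d : D := ⟨1 + m, hden⟩
  let y : D := ⟨(1 + m) * ((z : E) ^ j / q), hnum⟩
  have hdz : d * z ^ j = y * q := Subtype.ext (by simp [d, y, mul_assoc, hq0'])
  have hdI : d ∉ I := fun hd => h.one_add_notMem hm ((hI d).1 hd)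
  have hmem : d * z ^ j ∈ Q := hdz ▸ Q.mul_mem_left y hqQ
  exact hQ.mem_of_pow_mem j ((hQ.mem_or_mem hmem).resolve_left fun hd => hdI (hQI.le hd))

end Contraction

end IsKPlusM

end KPlusM

section LocalRingAtZero

variable {E : Type*} [Field E] {F : Subfield E} {Y : E}

/-- The localization `F[Y]_(Y)` inside `E`: quotients of values at `Y` of polynomials over `F`,
the denominator having nonzero constant term. The condition `aeval Y q ≠ 0` is automatic when `Y`
is transcendental over `F`. -/
def localRingAtZero (F : Subfield E) (Y : E) : Subring E where
  carrier := {x | ∃ p q : F[X], q.coeff 0 ≠ 0 ∧ aeval Y q ≠ 0 ∧ aeval Y p / aeval Y q = x}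
  zero_mem' := ⟨0, 1, by simp⟩
  one_mem' := ⟨1, 1, by simp⟩
  add_mem' := by
    rintro _ _ ⟨p, q, hq0, hq, rfl⟩ ⟨p', q', hq0', hq', rfl⟩
    refine ⟨p * q' + q * p', q * q', ?_, ?_, ?_⟩
    · simpa [mul_coeff_zero] using ⟨hq0, hq0'⟩
    · simpa using ⟨hq, hq'⟩
    · simp [div_add_div _ _ hq hq']
  neg_mem' := by
    rintro _ ⟨p, q, hq0, hq, rfl⟩
    exact ⟨-p, q, hq0, hq, by simp [neg_div]⟩
  mul_mem' := by
    rintro _ _ ⟨p, q, hq0, hq, rfl⟩ ⟨p', q', hq0', hq', rfl⟩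
    refine ⟨p * p', q * q', ?_, ?_, ?_⟩
    · simpa [mul_coeff_zero] using ⟨hq0, hq0'⟩
    · simpa using ⟨hq, hq'⟩
    · simp [div_mul_div_comm]

/-- The ideal `Y F[Y]_(Y)` of `F[Y]_(Y)`. -/
def maximalIdealAtZero (F : Subfield E) (Y : E) : Submodule (localRingAtZero F Y) E :=
  Submodule.span (localRingAtZero F Y) {Y}

theorem mem_maximalIdealAtZero {x : E} :
    x ∈ maximalIdealAtZero F Y ↔ ∃ v ∈ localRingAtZero F Y, Y * v = x := by
  simp [maximalIdealAtZero, Submodule.mem_span_singleton, Subring.smul_def, mul_comm Y]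

theorem aeval_mem_localRingAtZero (p : F[X]) : aeval Y p ∈ localRingAtZero F Y :=
  ⟨p, 1, by simp⟩

theorem mem_localRingAtZero_of_mem {c : E} (hc : c ∈ F) : c ∈ localRingAtZero F Y := by
  have h := aeval_mem_localRingAtZero (Y := Y) (C (⟨c, hc⟩ : F))
  rwa [aeval_C] at h

theorem self_mem_localRingAtZero : Y ∈ localRingAtZero F Y := by
  simpa using aeval_mem_localRingAtZero (F := F) (Y := Y) X

theorem self_mem_maximalIdealAtZero : Y ∈ maximalIdealAtZero F Y :=
  Submodule.mem_span_singleton_self Y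

theorem inv_one_add_mem_localRingAtZero {m : E} (hm : m ∈ maximalIdealAtZero F Y) :
    (1 + m)⁻¹ ∈ localRingAtZero F Y := by
  obtain ⟨_, ⟨p, q, hq0, hq, rfl⟩, rfl⟩ := mem_maximalIdealAtZero.1 hm
  have hsum : 1 + Y * (aeval Y p / aeval Y q) = aeval Y (q + X * p) / aeval Y q := by
    rw [map_add, map_mul, aeval_X]
    field_simp
  rw [hsum, inv_div]
  by_cases hzero : aeval Y (q + X * p) = 0
  · simp [hzero, zero_mem]
  · exact ⟨q, q + X * p, by simpa [mul_coeff_zero] using hq0, hzero, rfl⟩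

theorem one_notMem_maximalIdealAtZero (hY : Transcendental F Y) :
    (1 : E) ∉ maximalIdealAtZero F Y := by
  intro h
  obtain ⟨_, ⟨p, q, hq0, hq, rfl⟩, h1⟩ := mem_maximalIdealAtZero.1 h
  have hval : aeval Y (X * p) = aeval Y q := by
    rw [map_mul, aeval_X]
    field_simp at h1
    exact h1
  have hpoly : X * p = q := transcendental_iff_injective.1 hY hval
  simp [← hpoly, mul_coeff_zero] at hq0

theorem isKPlusM_localRingAtZero (hY : Transcendental F Y) {k : Subfield E} (hk : k ≤ F) :
    IsKPlusM k (localRingAtZero F Y) (maximalIdealAtZero F Y) where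
  mem_of_mem_field _ hc := mem_localRingAtZero_of_mem (hk hc)
  mem_of_mem_ideal _ hm := by
    obtain ⟨v, hv, rfl⟩ := mem_maximalIdealAtZero.1 hm
    exact mul_mem self_mem_localRingAtZero hv
  one_notMem := one_notMem_maximalIdealAtZero hY
  inv_one_add_mem _ := inv_one_add_mem_localRingAtZero

theorem exists_pow_div_mem_localRingAtZero (hY : Transcendental F Y) {x : E}
    (hx : x ∈ localRingAtZero F Y) (hx0 : x ≠ 0) : ∃ j : ℕ, Y ^ j / x ∈ localRingAtZero F Y := by
  obtain ⟨p, q, -, hq, rfl⟩ := hx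
  have hp : p ≠ 0 := by
    rintro rfl
    simp at hx0
  obtain ⟨s, hs, hXs⟩ := exists_eq_pow_rootMultiplicity_mul_and_not_dvd p hp 0
  rw [C_0, sub_zero] at hs hXs
  have hs0 : s.coeff 0 ≠ 0 := mt X_dvd_iff.2 hXs
  have hsY : aeval Y s ≠ 0 := fun h => hY ⟨s, by rintro rfl; simp at hs0, h⟩
  have hY0 : Y ≠ 0 := by
    rintro rfl
    exact hY isAlgebraic_zero
  have hpY : aeval Y p = Y ^ p.rootMultiplicity 0 * aeval Y s := by
    conv_lhs => rw [hs]
    simp only [map_mul, map_pow, aeval_X]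
  refine ⟨p.rootMultiplicity 0, q, s, hs0, hsY, ?_⟩
  rw [hpY]
  field_simp

theorem exists_pow_div_mem_maximalIdealAtZero (hY : Transcendental F Y) {q z : E}
    (hq : q ∈ localRingAtZero F Y) (hq0 : q ≠ 0) (hz : z ∈ maximalIdealAtZero F Y) :
    ∃ j : ℕ, z ^ j / q ∈ maximalIdealAtZero F Y := by
  obtain ⟨j, hj⟩ := exists_pow_div_mem_localRingAtZero hY hq hq0
  obtain ⟨v, hv, rfl⟩ := mem_maximalIdealAtZero.1 hz
  refine ⟨j + 1, mem_maximalIdealAtZero.2 ⟨Y ^ j / q * v ^ (j + 1), ?_, by ring⟩⟩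
  exact mul_mem hj (pow_mem hv _)

theorem mem_closure_union_singleton_iff {x : E} :
    x ∈ Subring.closure ((F : Set E) ∪ {Y}) ↔ ∃ p : F[X], aeval Y p = x := by
  have h : x ∈ Algebra.adjoin F {Y} ↔ x ∈ Subring.closure ((F : Set E) ∪ {Y}) := by
    rw [← Subalgebra.mem_toSubring, Algebra.adjoin_eq_ring_closure,
      show Set.range (algebraMap F E) = F from Subtype.range_coe]
  rw [← h, Algebra.adjoin_singleton_eq_range_aeval, AlgHom.mem_range]

theorem exists_eq_mul_closure_iff (hY : Transcendental F Y) (q : F[X]) :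
    (∃ h ∈ Subring.closure ((F : Set E) ∪ {Y}), aeval Y q = Y * h) ↔ q.coeff 0 = 0 := by
  simp only [mem_closure_union_singleton_iff]
  rw [← X_dvd_iff]
  constructor
  · rintro ⟨_, ⟨p, rfl⟩, hp⟩
    exact ⟨p, transcendental_iff_injective.1 hY (by simpa using hp)⟩
  · rintro ⟨p, rfl⟩
    exact ⟨_, ⟨p, rfl⟩, by simp⟩

theorem setOf_div_closure_eq_localRingAtZero (hY : Transcendental F Y) :
    {x | ∃ f ∈ Subring.closure ((F : Set E) ∪ {Y}), ∃ g ∈ Subring.closure ((F : Set E) ∪ {Y}),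
      (¬ ∃ h ∈ Subring.closure ((F : Set E) ∪ {Y}), g = Y * h) ∧ x = f / g} =
    localRingAtZero F Y := by
  ext x
  constructor
  · rintro ⟨_, hf, _, hg, hdvd, rfl⟩
    obtain ⟨p, rfl⟩ := mem_closure_union_singleton_iff.1 hf
    obtain ⟨q, rfl⟩ := mem_closure_union_singleton_iff.1 hg
    refine ⟨p, q, mt (exists_eq_mul_closure_iff hY q).2 hdvd, fun h0 => hdvd ?_, rfl⟩
    exact ⟨0, zero_mem _, by simpa using h0⟩
  · rintro ⟨p, q, hq0, -, rfl⟩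
    exact ⟨_, mem_closure_union_singleton_iff.2 ⟨p, rfl⟩, _,
      mem_closure_union_singleton_iff.2 ⟨q, rfl⟩,
      mt (exists_eq_mul_closure_iff hY q).1 hq0, rfl⟩

theorem aeval_map_inclusion {F' : Subfield E} (h : F ≤ F') (p : F[X]) :
    aeval Y (p.map (Subfield.inclusion h)) = aeval Y p := by
  simp only [aeval_def, eval₂_map]
  rfl

theorem transcendental_mono {F' : Subfield E} (h : F ≤ F') (hY : Transcendental F' Y) :
    Transcendental F Y := fun ⟨p, hp, hpY⟩ =>
  hY ⟨p.map (Subfield.inclusion h),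
    (Polynomial.map_ne_zero_iff (Subfield.inclusion h).injective).2 hp,
    (aeval_map_inclusion h p).trans hpY⟩

theorem localRingAtZero_mono {F' : Subfield E} (h : F ≤ F') :
    localRingAtZero F Y ≤ localRingAtZero F' Y := by
  rintro _ ⟨p, q, hq0, hq, rfl⟩
  refine ⟨p.map (Subfield.inclusion h), q.map (Subfield.inclusion h), ?_, ?_, ?_⟩
  · simpa using hq0
  · simpa only [aeval_map_inclusion] using hq
  · simp only [aeval_map_inclusion]

theorem maximalIdealAtZero_mono {F' : Subfield E} (h : F ≤ F') {x : E}
    (hx : x ∈ maximalIdealAtZero F Y) : x ∈ maximalIdealAtZero F' Y := by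
  obtain ⟨v, hv, rfl⟩ := mem_maximalIdealAtZero.1 hx
  exact mem_maximalIdealAtZero.2 ⟨v, localRingAtZero_mono h hv, rfl⟩

theorem exists_map_inclusion_eq {F : ℕ → Subfield E} (hF : Monotone F)
    (p : (⨆ n, F n : Subfield E)[X]) :
    ∃ n, ∀ m, n ≤ m → ∃ s : (F m)[X], s.map (Subfield.inclusion (le_iSup F m)) = p := by
  have hcoeff : ∀ i, ∃ n, (p.coeff i : E) ∈ F n := fun i =>
    (Subfield.mem_iSup_of_directed hF.directed_le).1 (p.coeff i).2
  choose n hn using hcoeff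
  refine ⟨p.support.sup n, fun m hm => (mem_lifts p).1 ((lifts_iff_coeff_lifts p).2 fun i => ?_)⟩
  by_cases hi : i ∈ p.support
  · exact ⟨⟨p.coeff i, hF ((Finset.le_sup hi).trans hm) (hn i)⟩, rfl⟩
  · exact ⟨0, by rw [map_zero, notMem_support_iff.1 hi]⟩

theorem mem_localRingAtZero_iSup {F : ℕ → Subfield E} (hF : Monotone F) {x : E} :
    x ∈ localRingAtZero (⨆ n, F n) Y ↔ ∃ n, x ∈ localRingAtZero (F n) Y := by
  refine ⟨?_, fun ⟨n, hx⟩ => localRingAtZero_mono (le_iSup F n) hx⟩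
  rintro ⟨p, q, hq0, hq, rfl⟩
  obtain ⟨a, ha⟩ := exists_map_inclusion_eq hF p
  obtain ⟨b, hb⟩ := exists_map_inclusion_eq hF q
  obtain ⟨p, rfl⟩ := ha (max a b) (le_max_left a b)
  obtain ⟨q, rfl⟩ := hb (max a b) (le_max_right a b)
  simp only [aeval_map_inclusion] at hq ⊢
  exact ⟨max a b, p, q, by simpa using hq0, hq, rfl⟩

theorem mem_maximalIdealAtZero_iSup {F : ℕ → Subfield E} (hF : Monotone F) {x : E} :
    x ∈ maximalIdealAtZero (⨆ n, F n) Y ↔ ∃ n, x ∈ maximalIdealAtZero (F n) Y := by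
  simp only [mem_maximalIdealAtZero, mem_localRingAtZero_iSup hF]
  exact ⟨fun ⟨v, ⟨n, hn⟩, hv⟩ => ⟨n, v, hn, hv⟩, fun ⟨n, v, hn, hv⟩ => ⟨v, ⟨n, hn⟩, hv⟩⟩

theorem localRingAtZero_le {K : Subfield E} (hF : F ≤ K) (hY : Y ∈ K) :
    localRingAtZero F Y ≤ K.toSubring := by
  have haeval : ∀ p : F[X], aeval Y p ∈ K := fun p => by
    rw [aeval_eq_sum_range]
    exact sum_mem fun i _ => mul_mem (hF (p.coeff i).2) (pow_mem hY i)
  rintro _ ⟨p, q, -, -, rfl⟩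
  exact K.div_mem (haeval p) (haeval q)

end LocalRingAtZero

section Kronecker

theorem exists_coeff_inv_mul_mem {L : Type*} [Field L] (A : ValuationSubring L) {p : L[X]}
    (hp : p ≠ 0) : ∃ j, p.coeff j ≠ 0 ∧ ∀ i, (p.coeff j)⁻¹ * p.coeff i ∈ A := by
  obtain ⟨j, hj, hmax⟩ := Finset.exists_max_image p.support (fun i => A.valuation (p.coeff i))
    (support_nonempty.2 hp)
  have hj0 : p.coeff j ≠ 0 := mem_support_iff.1 hj
  refine ⟨j, hj0, fun i => ?_⟩
  by_cases hi : p.coeff i = 0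
  · simp [hi, zero_mem]
  obtain ⟨a, ha⟩ := (A.valuation_le_iff _ _).1 (hmax i (mem_support_iff.2 hi))
  rw [← ha, mul_comm, mul_assoc, mul_inv_cancel₀ hj0, mul_one]
  exact a.2

theorem coeffs_X_pow_mul_subset {R : Type*} [Semiring R] (f : R[X]) (N : ℕ) :
    (X ^ N * f).coeffs ⊆ f.coeffs := by
  intro c hc
  obtain ⟨i, hi, rfl⟩ := mem_coeffs_iff.1 hc
  rw [mem_support_iff, coeff_X_pow_mul'] at hi
  rw [coeff_X_pow_mul']
  split_ifs at hi ⊢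
  exacts [coeff_mem_coeffs hi, absurd rfl hi]

theorem coeffs_subset_coeffs_X_pow_mul_add_left {R : Type*} [Semiring R] {f : R[X]} (g : R[X])
    {N : ℕ} (hN : f.natDegree < N) : g.coeffs ⊆ (X ^ N * g + f).coeffs := by
  intro c hc
  obtain ⟨i, hi, rfl⟩ := mem_coeffs_iff.1 hc
  have hcoeff : (X ^ N * g + f).coeff (i + N) = g.coeff i := by
    rw [coeff_add, coeff_X_pow_mul, coeff_eq_zero_of_natDegree_lt (p := f) (by lia), add_zero]
  rw [← hcoeff]
  exact coeff_mem_coeffs (by rwa [hcoeff, ← mem_support_iff])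

theorem coeffs_subset_coeffs_X_pow_mul_add_right {R : Type*} [Semiring R] {f : R[X]} (g : R[X])
    {N : ℕ} (hN : f.natDegree < N) : f.coeffs ⊆ (X ^ N * g + f).coeffs := by
  intro c hc
  obtain ⟨i, hi, rfl⟩ := mem_coeffs_iff.1 hc
  have hiN : ¬ N ≤ i := ((le_natDegree_of_mem_supp i hi).trans_lt hN).not_ge
  have hcoeff : (X ^ N * g + f).coeff i = f.coeff i := by
    rw [coeff_add, coeff_X_pow_mul', if_neg hiN, zero_add]
  rw [← hcoeff]
  exact coeff_mem_coeffs (by rwa [hcoeff, ← mem_support_iff])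

theorem aeval_X_pow_mul_add {R E : Type*} [CommSemiring R] [Field E] [Algebra R E] {T : E}
    (f : R[X]) {g : R[X]} (hT : T ≠ 0) (hg : aeval T g ≠ 0) (N : ℕ) :
    aeval T (X ^ N * g + f) =
      T ^ N * aeval T g * (1 + T⁻¹ ^ N * (aeval T f / aeval T g)) := by
  simp only [map_add, map_mul, map_pow, aeval_X, inv_pow]
  field_simp

theorem exists_aeval_div_eq_of_mem_adjoin {F E : Type*} [Field F] [Field E] [Algebra F E]
    {T x : E} (hx : x ∈ IntermediateField.adjoin F {T}) :
    ∃ f g : F[X], aeval T g ≠ 0 ∧ x = aeval T f / aeval T g := by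
  obtain ⟨f, g, rfl⟩ := (IntermediateField.mem_adjoin_simple_iff F x).1 hx
  by_cases hg : aeval T g = 0
  · exact ⟨0, 1, by simp, by simp [hg]⟩
  · exact ⟨f, g, hg, rfl⟩

variable {k0 : Type} [Field k0] {r : ℕ} {L : Subfield (Amb k0 r)} {T : Amb k0 r}

theorem div_aeval_mem_nagataSet {W : Subring (Amb k0 r)} (hW : ∀ x ∈ L, x ∈ W ∨ x⁻¹ ∈ W)
    {p q : L[X]} (hp : p ≠ 0) (hqp : q.coeffs ⊆ p.coeffs) :
    aeval T q / aeval T p ∈ nagataSet k0 r W T := by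
  let A : ValuationSubring L :=
    ValuationSubring.ofSubring (W.comap L.subtype) fun x => hW x x.2
  obtain ⟨j, hj, hmem⟩ := exists_coeff_inv_mul_mem A hp
  have hcoeff : ∀ s : L[X], (∀ i, (p.coeff j)⁻¹ * s.coeff i ∈ A) →
      ∀ i, ((C (p.coeff j)⁻¹ * s).map (algebraMap L (Amb k0 r))).coeff i ∈ W := fun s hs i => by
    rw [coeff_map, coeff_C_mul]
    exact hs i
  refine ⟨(C (p.coeff j)⁻¹ * q).map (algebraMap L _), (C (p.coeff j)⁻¹ * p).map (algebraMap L _),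
    hcoeff q fun i => ?_, hcoeff p hmem, ⟨{j}, fun _ => 1, fun _ _ => W.one_mem, ?_⟩, ?_⟩
  · by_cases hi : q.coeff i = 0
    · simp [hi, zero_mem]
    · obtain ⟨i', -, hi'⟩ := mem_coeffs_iff.1 (hqp (coeff_mem_coeffs hi))
      exact hi' ▸ hmem i'
  · rw [Finset.sum_singleton, one_mul, coeff_map, coeff_C_mul, inv_mul_cancel₀ hj, map_one]
  · have hC : algebraMap L (Amb k0 r) (p.coeff j)⁻¹ ≠ 0 := by simpa using hj
    simp only [eval_map_algebraMap, map_mul, aeval_C]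
    rw [mul_div_mul_left _ _ hC]

theorem div_aeval_mem_krSet (D : Set (Amb k0 r)) {p q : L[X]} (hp : p ≠ 0)
    (hqp : q.coeffs ⊆ p.coeffs) :
    aeval T q / aeval T p ∈ krSet k0 r D L T :=
  Set.mem_iInter₂.2 fun _ hW => div_aeval_mem_nagataSet hW.2.2 hp hqp

theorem subset_krSet (D : Set (Amb k0 r)) (L : Subfield (Amb k0 r)) (T : Amb k0 r) :
    D ⊆ krSet k0 r D L T := by
  refine fun x hx => Set.mem_iInter₂.2 fun W hW => ⟨C x, 1, fun i => ?_, fun i => ?_,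
    ⟨{0}, fun _ => 1, fun _ _ => W.one_mem, by simp⟩, by simp⟩
  · rw [coeff_C]
    split_ifs
    exacts [hW.1 hx, W.zero_mem]
  · rw [coeff_one]
    split_ifs
    exacts [W.one_mem, W.zero_mem]

/-- With `x = f(T) / g(T)` and `m₁ = x / T ^ N ∈ M`, the element `(1 + m₁)⁻¹` of `1 + M` equals
`T ^ N g(T) / (T ^ N g(T) + f(T))`, and for `N > deg f` the denominator has all the coefficients of
`f` and `g`. -/
theorem exists_one_add_mem_krSet {k : Subfield (Amb k0 r)} {V : Subring (Amb k0 r)}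
    {M : Submodule V (Amb k0 r)} (h : IsKPlusM k V M) (D : Set (Amb k0 r)) (hT0 : T ≠ 0)
    (hT : T⁻¹ ∈ M) {x : Amb k0 r} (hxV : x ∈ V) (hx : x ∈ IntermediateField.adjoin L {T}) :
    ∃ m ∈ M, 1 + m ∈ krSet k0 r D L T ∧ (1 + m) * x ∈ krSet k0 r D L T := by
  obtain ⟨f, g, hgT, rfl⟩ := exists_aeval_div_eq_of_mem_adjoin hx
  let N := f.natDegree + 1
  have hN : f.natDegree < N := Nat.lt_succ_self _
  let m₁ := T⁻¹ ^ N * (aeval T f / aeval T g)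
  have hm₁ : m₁ ∈ M := by
    have hV : T⁻¹ ^ f.natDegree * (aeval T f / aeval T g) ∈ V :=
      V.mul_mem (V.pow_mem (h.mem_of_mem_ideal _ hT) _) hxV
    have hVT := mul_mem_ideal hV hT
    rwa [mul_right_comm, ← pow_succ] at hVT
  have hne : 1 + m₁ ≠ 0 := h.one_add_ne_zero hm₁
  obtain ⟨m, hm, hinv⟩ := h.exists_inv_one_add_eq hm₁
  have hden : aeval T (X ^ N * g + f) = T ^ N * aeval T g * (1 + m₁) :=
    aeval_X_pow_mul_add f hT0 hgT N
  have hp : X ^ N * g + f ≠ 0 := by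
    intro h0
    rw [h0, map_zero] at hden
    exact mul_ne_zero (mul_ne_zero (pow_ne_zero N hT0) hgT) hne hden.symm
  have h1 : 1 + m = aeval T (X ^ N * g) / aeval T (X ^ N * g + f) := by
    rw [← hinv, hden, map_mul, map_pow, aeval_X]
    field_simp
  have h2 : (1 + m) * (aeval T f / aeval T g) =
      aeval T (X ^ N * f) / aeval T (X ^ N * g + f) := by
    rw [← hinv, hden, map_mul, map_pow, aeval_X]
    field_simp
  refine ⟨m, hm, ?_, ?_⟩
  · rw [h1]
    exact div_aeval_mem_krSet D hp ((coeffs_X_pow_mul_subset g N).trans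
      (coeffs_subset_coeffs_X_pow_mul_add_left g hN))
  · rw [h2]
    exact div_aeval_mem_krSet D hp ((coeffs_X_pow_mul_subset f N).trans
      (coeffs_subset_coeffs_X_pow_mul_add_right g hN))

end Kronecker

section Tower

variable (k0 : Type) [Field k0] (r : ℕ)

/-- The field generated over `k0` by all the indeterminates except `Y`. -/
noncomputable def fieldWithoutY : Subfield (Amb k0 r) :=
  (IntermediateField.adjoin k0 ((fun i => algebraMap (MvPolynomial (TowerVars r) k0) (Amb k0 r)
    (MvPolynomial.X i)) '' {Sum.inr (Sum.inl ())}ᶜ)).toSubfield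

theorem ambY_ne_zero : ambY k0 r ≠ 0 := by
  simp [ambY]

theorem transcendental_ambY_fieldWithoutY : Transcendental (fieldWithoutY k0 r) (ambY k0 r) := by
  have hind : AlgebraicIndependent k0 fun i : TowerVars r =>
      algebraMap (MvPolynomial (TowerVars r) k0) (Amb k0 r) (MvPolynomial.X i) :=
    (MvPolynomial.algebraicIndependent_X (TowerVars r) k0).map'
      (f := IsScalarTower.toAlgHom k0 (MvPolynomial (TowerVars r) k0) (Amb k0 r))
      (IsFractionRing.injective _ _)
  exact IntermediateField.transcendental_adjoin_iff.2 <|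
    hind.transcendental_adjoin (s := {Sum.inr (Sum.inl ())}ᶜ) (i := Sum.inr (Sum.inl ()))
      (by simp)

theorem kfld_mono : Monotone (kfld k0 r) := fun _ _ hmn =>
  Subfield.closure_mono <| Set.union_subset_union_right _
    fun _ ⟨i, h1, hi, hx⟩ => ⟨i, h1, hi.trans hmn, hx⟩

theorem kfld_le_Ffld (n : ℕ) : kfld k0 r n ≤ Ffld k0 r n := fun _ hx =>
  Subfield.subset_closure (Or.inl hx)

theorem Ffld_mono : Monotone (Ffld k0 r) := fun _ _ hmn =>
  Subfield.closure_mono (Set.union_subset_union_left _ (kfld_mono k0 r hmn))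

theorem kfldU_eq_iSup : kfldU k0 r = (⨆ n, kfld k0 r n : Subfield (Amb k0 r)) :=
  (Subfield.coe_iSup_of_directed (kfld_mono k0 r).directed_le).symm

theorem FfldU_eq_iSup : FfldU k0 r = ⨆ n, Ffld k0 r n := by
  apply le_antisymm
  · refine Subfield.closure_le.2 (Set.union_subset ?_ ?_)
    · rw [kfldU_eq_iSup]
      exact iSup_mono (kfld_le_Ffld k0 r)
    · exact fun _ hx => le_iSup (Ffld k0 r) 0 (Subfield.subset_closure (Or.inr hx))
  · exact iSup_le fun n => Subfield.closure_mono <|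
      Set.union_subset_union_left _ fun _ hx => Set.mem_iUnion.2 ⟨n, hx⟩

theorem iSup_kfld_le_FfldU : ⨆ n, kfld k0 r n ≤ FfldU k0 r :=
  (iSup_mono (kfld_le_Ffld k0 r)).trans (FfldU_eq_iSup k0 r).ge

theorem kfld_le_fieldWithoutY (n : ℕ) : kfld k0 r n ≤ fieldWithoutY k0 r := by
  refine Subfield.closure_le.2 (Set.union_subset ?_ ?_)
  · rintro _ ⟨c, rfl⟩
    exact IntermediateField.algebraMap_mem _ c
  · rintro _ ⟨i, -, -, rfl⟩
    exact IntermediateField.subset_adjoin _ _ ⟨Sum.inl i, by simp, rfl⟩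

theorem FfldU_le_fieldWithoutY : FfldU k0 r ≤ fieldWithoutY k0 r := by
  refine Subfield.closure_le.2 (Set.union_subset ?_ ?_)
  · exact Set.iUnion_subset (kfld_le_fieldWithoutY k0 r)
  · rintro _ ⟨i, rfl⟩
    exact IntermediateField.subset_adjoin _ _ ⟨Sum.inr (Sum.inr i), by simp, rfl⟩

theorem transcendental_ambY_FfldU : Transcendental (FfldU k0 r) (ambY k0 r) :=
  transcendental_mono (FfldU_le_fieldWithoutY k0 r) (transcendental_ambY_fieldWithoutY k0 r)

theorem transcendental_ambY_Ffld (n : ℕ) : Transcendental (Ffld k0 r n) (ambY k0 r) :=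
  transcendental_mono ((le_iSup (Ffld k0 r) n).trans (FfldU_eq_iSup k0 r).ge)
    (transcendental_ambY_FfldU k0 r)

theorem isKPlusM_kfld (n : ℕ) :
    IsKPlusM (kfld k0 r n) (localRingAtZero (Ffld k0 r n) (ambY k0 r))
      (maximalIdealAtZero (Ffld k0 r n) (ambY k0 r)) :=
  isKPlusM_localRingAtZero (transcendental_ambY_Ffld k0 r n) (kfld_le_Ffld k0 r n)

theorem isKPlusM_iSup_kfld :
    IsKPlusM (⨆ n, kfld k0 r n) (localRingAtZero (FfldU k0 r) (ambY k0 r))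
      (maximalIdealAtZero (FfldU k0 r) (ambY k0 r)) :=
  isKPlusM_localRingAtZero (transcendental_ambY_FfldU k0 r) (iSup_kfld_le_FfldU k0 r)

theorem Mset_eq_maximalIdealAtZero (n : ℕ) :
    Mset k0 r n = maximalIdealAtZero (Ffld k0 r n) (ambY k0 r) := by
  have hV : Vset k0 r n = localRingAtZero (Ffld k0 r n) (ambY k0 r) :=
    setOf_div_closure_eq_localRingAtZero (transcendental_ambY_Ffld k0 r n)
  ext x
  simp [Mset, hV, mem_maximalIdealAtZero, eq_comm]

theorem MsetU_eq_maximalIdealAtZero :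
    MsetU k0 r = maximalIdealAtZero (FfldU k0 r) (ambY k0 r) := by
  have hV : VsetU k0 r = localRingAtZero (FfldU k0 r) (ambY k0 r) :=
    setOf_div_closure_eq_localRingAtZero (transcendental_ambY_FfldU k0 r)
  ext x
  simp [MsetU, hV, mem_maximalIdealAtZero, eq_comm]

theorem Aset_eq_add (n : ℕ) : Aset k0 r n =
    (kfld k0 r n : Set (Amb k0 r)) + maximalIdealAtZero (Ffld k0 r n) (ambY k0 r) := by
  ext x
  simp only [Aset, Mset_eq_maximalIdealAtZero, Set.mem_add, Set.mem_ofPred_eq, SetLike.mem_coe,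
    eq_comm]

theorem AsetU_eq_add : AsetU k0 r =
    ((⨆ n, kfld k0 r n : Subfield (Amb k0 r)) : Set (Amb k0 r)) +
      maximalIdealAtZero (FfldU k0 r) (ambY k0 r) := by
  ext x
  simp only [AsetU, MsetU_eq_maximalIdealAtZero, kfldU_eq_iSup, Set.mem_add,
    Set.mem_ofPred_eq, SetLike.mem_coe, eq_comm]

theorem MsetU_eq_iUnion : MsetU k0 r = ⋃ n, Mset k0 r n := by
  ext x
  rw [MsetU_eq_maximalIdealAtZero, FfldU_eq_iSup, SetLike.mem_coe,
    mem_maximalIdealAtZero_iSup (Ffld_mono k0 r)]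
  simp only [Mset_eq_maximalIdealAtZero, SetLike.mem_coe, Set.mem_iUnion]

theorem Mset_mono : Monotone (Mset k0 r) := fun m n hmn => by
  rw [Mset_eq_maximalIdealAtZero, Mset_eq_maximalIdealAtZero]
  exact fun _ => maximalIdealAtZero_mono (Ffld_mono k0 r hmn)

theorem Aset_mono : Monotone (Aset k0 r) := fun _ _ hmn _ ⟨c, hc, m, hm, hx⟩ =>
  ⟨c, kfld_mono k0 r hmn hc, m, Mset_mono k0 r hmn hm, hx⟩

theorem AsetU_eq_iUnion : AsetU k0 r = ⋃ n, Aset k0 r n := by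
  ext x
  rw [AsetU, MsetU_eq_iUnion, Set.mem_iUnion]
  constructor
  · rintro ⟨c, hc, m, hm, rfl⟩
    obtain ⟨i, hi⟩ := Set.mem_iUnion.1 hc
    obtain ⟨j, hj⟩ := Set.mem_iUnion.1 hm
    exact ⟨max i j, c, kfld_mono k0 r (le_max_left i j) hi, m,
      Mset_mono k0 r (le_max_right i j) hj, rfl⟩
  · rintro ⟨n, c, hc, m, hm, rfl⟩
    exact ⟨c, Set.mem_iUnion.2 ⟨n, hc⟩, m, Set.mem_iUnion.2 ⟨n, hm⟩, rfl⟩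

theorem ambX_mem_kfld {n i : ℕ} (h1 : 1 ≤ i) (hi : i ≤ n) : ambX k0 r i ∈ kfld k0 r n :=
  Subfield.subset_closure (Or.inr ⟨i, h1, hi, rfl⟩)

theorem ambX_eq_ambX'_sub_inv (n : ℕ) : ambX k0 r n = ambX' k0 r n - (ambY k0 r)⁻¹ := by
  have hY := ambY_ne_zero k0 r
  rw [ambX']
  field_simp
  ring

theorem Kfld_le_adjoin_ambX' (n : ℕ) : Kfld k0 r (n + 2) ≤
    (IntermediateField.adjoin (Kfld k0 r (n + 1)) {ambX' k0 r (n + 2)}).toSubfield := by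
  set G := IntermediateField.adjoin (Kfld k0 r (n + 1)) {ambX' k0 r (n + 2)}
  have hK : Kfld k0 r (n + 1) ≤ G.toSubfield := fun x hx => G.algebraMap_mem ⟨x, hx⟩
  have hY : ambY k0 r ∈ G := hK (Subfield.subset_closure (Or.inr rfl))
  have hF : Ffld k0 r (n + 1) ≤ G.toSubfield := fun x hx =>
    hK (Subfield.subset_closure (Or.inl hx))
  have hk : kfld k0 r (n + 2) ≤ G.toSubfield := by
    refine Subfield.closure_le.2 (Set.union_subset ?_ ?_)
    · exact fun x hx => hF (kfld_le_Ffld k0 r _ (Subfield.subset_closure (Or.inl hx)))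
    · rintro _ ⟨i, h1, hi, rfl⟩
      obtain hlt | rfl := hi.lt_or_eq
      · exact hF (kfld_le_Ffld k0 r _ (ambX_mem_kfld k0 r h1 (Nat.le_of_lt_succ hlt)))
      · rw [ambX_eq_ambX'_sub_inv]
        exact sub_mem (IntermediateField.mem_adjoin_simple_self _ _) (inv_mem hY)
  refine Subfield.closure_le.2 (Set.union_subset ?_ (Set.singleton_subset_iff.2 hY))
  refine (Subfield.closure_le (t := G.toSubfield)).2 (Set.union_subset hk ?_)
  exact fun x hx => hF (Subfield.subset_closure (Or.inr hx))

theorem ambY_mul_ambX_mem_maximalIdealAtZero {n : ℕ} (hn : 1 ≤ n) :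
    ambY k0 r * ambX k0 r n ∈ maximalIdealAtZero (Ffld k0 r n) (ambY k0 r) :=
  mem_maximalIdealAtZero.2 ⟨_, mem_localRingAtZero_of_mem
    (kfld_le_Ffld k0 r n (ambX_mem_kfld k0 r hn le_rfl)), rfl⟩

theorem ambX'_ne_zero {n : ℕ} (hn : 1 ≤ n) : ambX' k0 r n ≠ 0 :=
  div_ne_zero ((isKPlusM_kfld k0 r n).one_add_ne_zero
    (ambY_mul_ambX_mem_maximalIdealAtZero k0 r hn)) (ambY_ne_zero k0 r)

theorem inv_ambX'_mem_maximalIdealAtZero {n : ℕ} (hn : 1 ≤ n) :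
    (ambX' k0 r n)⁻¹ ∈ maximalIdealAtZero (Ffld k0 r n) (ambY k0 r) := by
  rw [ambX', inv_div, div_eq_mul_inv]
  exact mem_maximalIdealAtZero.2 ⟨_, inv_one_add_mem_localRingAtZero
    (ambY_mul_ambX_mem_maximalIdealAtZero k0 r hn), rfl⟩

theorem Dset_succ_subset_Aset (n : ℕ) : Dset k0 r (n + 1) ⊆ Aset k0 r (n + 1) := by
  cases n with
  | zero => exact subset_rfl
  | succ n => exact Set.inter_subset_right

theorem Dset_mono : Monotone (Dset k0 r) := monotone_nat_of_le_succ fun n => by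
  cases n with
  | zero => exact subset_rfl
  | succ n =>
    exact Set.subset_inter (subset_krSet _ _ _)
      ((Dset_succ_subset_Aset k0 r n).trans (Aset_mono k0 r (Nat.le_succ _)))

theorem oneAddDense_Dset (n : ℕ) :
    OneAddDense (Mset k0 r (n + 2)) (Dset k0 r (n + 2)) (Aset k0 r (n + 2)) := by
  intro x hx
  have h := isKPlusM_kfld k0 r (n + 2)
  rw [Aset_eq_add] at hx
  have hxV := h.add_subset hx
  have hVK : localRingAtZero (Ffld k0 r (n + 2)) (ambY k0 r) ≤ (Kfld k0 r (n + 2)).toSubring :=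
    localRingAtZero_le (fun _ hy => Subfield.subset_closure (Or.inl hy))
      (Subfield.subset_closure (Or.inr rfl))
  obtain ⟨m, hm, hden, hnum⟩ := exists_one_add_mem_krSet h (Dset k0 r (n + 1))
    (ambX'_ne_zero k0 r (Nat.le_add_left 1 _))
    (inv_ambX'_mem_maximalIdealAtZero k0 r (Nat.le_add_left 1 _)) hxV
    (Kfld_le_adjoin_ambX' k0 r n (hVK hxV))
  rw [Mset_eq_maximalIdealAtZero, Dset, Aset_eq_add]
  have h1 : 1 + m ∈ (kfld k0 r (n + 2) : Set (Amb k0 r)) +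
      maximalIdealAtZero (Ffld k0 r (n + 2)) (ambY k0 r) := Set.add_mem_add (one_mem _) hm
  exact ⟨m, hm, ⟨hden, h1⟩, hnum, h.mul_mem_add h1 hx⟩

theorem DsetU_subset_AsetU : DsetU k0 r ⊆ AsetU k0 r := by
  rw [AsetU_eq_iUnion]
  refine Set.iUnion_subset fun n => ?_
  exact (Dset_mono k0 r (Nat.le_succ n)).trans <|
    (Dset_succ_subset_Aset k0 r n).trans (Set.subset_iUnion (Aset k0 r) _)

theorem oneAddDense_DsetU : OneAddDense (MsetU k0 r) (DsetU k0 r) (AsetU k0 r) := by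
  intro x hx
  rw [AsetU_eq_iUnion] at hx
  obtain ⟨n, hn⟩ := Set.mem_iUnion.1 hx
  obtain ⟨m, hm, hden, hnum⟩ :=
    oneAddDense_Dset k0 r n x (Aset_mono k0 r (Nat.le_add_right n 2) hn)
  rw [MsetU_eq_iUnion]
  exact ⟨m, Set.mem_iUnion_of_mem _ hm, Set.mem_iUnion_of_mem _ hden,
    Set.mem_iUnion_of_mem _ hnum⟩

theorem MMsetU_eq_inter : MMsetU k0 r = MsetU k0 r ∩ DsetU k0 r := by
  rw [MsetU_eq_iUnion]
  ext x
  constructor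
  · intro hx
    obtain ⟨n, hM, hD⟩ := Set.mem_iUnion.1 hx
    exact ⟨Set.mem_iUnion_of_mem _ hM, Set.mem_iUnion_of_mem _ hD⟩
  · rintro ⟨hM, hD⟩
    obtain ⟨i, hi⟩ := Set.mem_iUnion.1 hM
    obtain ⟨j, hj⟩ := Set.mem_iUnion.1 hD
    exact Set.mem_iUnion.2 ⟨max i j, Mset_mono k0 r (by lia) hi, Dset_mono k0 r (by lia) hj⟩

end Tower

theorem mem_iff_of_image_val_eq_inter {R : Type*} [Ring R] {D : Subring R} {I : Ideal D}
    {M : Set R} (hI : Subtype.val '' (I : Set D) = M ∩ D) (x : D) : x ∈ I ↔ (x : R) ∈ M := by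
  rw [← SetLike.mem_coe, ← Subtype.val_injective.mem_set_image, hI]
  simp

end KroneckerTower

/-- In the tower construction, with `D := ⋃_{n ≥ 1} Dₙ` and
`𝓜 := ⋃_{n ≥ 2} 𝓜ₙ`: the localization `D_𝓜` equals `A = k + M`, and `𝓜` is a
height-one maximal ideal of `D`. -/
theorem tower_localization_at_MM_eq_A
    (k0 : Type) [Field k0] (r : ℕ) (hr : 2 ≤ r) :
    locAt k0 r (DsetU k0 r) (MMsetU k0 r) = AsetU k0 r ∧
    ∀ D' : Subring (Amb k0 r), (D' : Set (Amb k0 r)) = DsetU k0 r →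
      ∀ I : Ideal ↥D', Subtype.val '' (I : Set ↥D') = MMsetU k0 r →
        I.IsMaximal ∧ I ≠ ⊥ ∧
        ∀ Q : Ideal ↥D', Q.IsPrime → Q < I → Q = ⊥ := by
  have h := KroneckerTower.isKPlusM_iSup_kfld k0 r
  have hY := KroneckerTower.transcendental_ambY_FfldU k0 r
  have hDA := KroneckerTower.DsetU_subset_AsetU k0 r
  have hdense := KroneckerTower.oneAddDense_DsetU k0 r
  rw [KroneckerTower.MMsetU_eq_inter]
  rw [KroneckerTower.AsetU_eq_add] at hDA hdense ⊢
  rw [KroneckerTower.MsetU_eq_maximalIdealAtZero] at hdense ⊢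
  refine ⟨h.fractions_eq_add hDA hdense, fun D' hD I hI => ?_⟩
  rw [← hD] at hDA hdense hI
  have hmem := KroneckerTower.mem_iff_of_image_val_eq_inter hI
  refine ⟨h.isMaximal_contraction hDA hdense hmem, ?_, fun Q hQ hQI => ?_⟩
  · exact h.contraction_ne_bot hdense hmem KroneckerTower.self_mem_maximalIdealAtZero
      (KroneckerTower.ambY_ne_zero k0 r)
  · exact h.eq_bot_of_lt_contraction hdense hmem (fun q hq hq0 z hz =>
      KroneckerTower.exists_pow_div_mem_maximalIdealAtZero hY (h.mem_of_mem_ideal q hq) hq0 hz)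
      hQ hQI
end
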